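/- Let c = 2π√(5/12). For every ε > 0 there exists N such that for all positive integers m, n with m ≤ 2n and min(m, 2n−m) ≥ N, one has | D(m,n) / [ (5c/(2^5·3)) · e^{c√μ}/μ² · (1 + e^{−c|n−m|/(2√μ)})^{−2} ] − 1 | < ε, where μ := min(m, 2n−m). In other words, uniformly for positive integers m, n with m ≤ 2n, D(m,n) ~ (5c/96) · e^{c√μ}/μ² · (1 + e^{−c|n−m|/(2√μ)})^{−2} as μ = min(m, 2n−m) → ∞. -/

import Mathlib

open Finset

/-- A pair of sequences of parts is *steadily decreasing* if
`min (a i) (b i) ≥ max (a (i+1)) (b (i+1))` for all `i`. -/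
noncomputable def SteadilyDecreasing (a b : ℕ → ℕ) : Prop :=
  ∀ i, max (a (i + 1)) (b (i + 1)) ≤ min (a i) (b i)

/-- `bipartitePi m n` is the number of pairs of partitions (given as non-increasing,
finitely supported sequences) of the bipartite number `(m, n)` with steadily
decreasing parts. -/
noncomputable def bipartitePi (m n : ℕ) : ℕ :=
  Nat.card {p : (ℕ →₀ ℕ) × (ℕ →₀ ℕ) //
    (∀ i, p.1 (i + 1) ≤ p.1 i) ∧ (∀ i, p.2 (i + 1) ≤ p.2 i) ∧
    SteadilyDecreasing p.1 p.2 ∧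
    (p.1.sum fun _ x => x) = m ∧ (p.2.sum fun _ x => x) = n}

/-- The partition function `p n`. -/
noncomputable def partitionCount (n : ℕ) : ℕ := Nat.card (Nat.Partition n)

/-- The partition function extended to the integers, with `p r = 0` for `r < 0`. -/
noncomputable def partitionCountInt (r : ℤ) : ℕ := if 0 ≤ r then partitionCount r.toNat else 0

/-- The cubic partition function `c n`, counting partitions of `n` in which even
parts come in two colors (equivalently, pairs of a partition together with a
partition into even parts, of total size `n`). -/
noncomputable def cubicPartition (n : ℕ) : ℕ :=
  Nat.card {p : Multiset ℕ × Multiset ℕ //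
    (∀ i ∈ p.1, 0 < i) ∧ (∀ i ∈ p.2, 0 < i ∧ Even i) ∧ p.1.sum + p.2.sum = n}

/-- The Andrews–Garvan crank of a partition: the largest part if there are no ones,
and otherwise the number of parts larger than the number of ones minus the number of
ones. -/
noncomputable def crank {n : ℕ} (l : n.Partition) : ℤ :=
  if l.parts.count 1 = 0 then (l.parts.sup : ℤ)
  else ((l.parts.filter fun p => l.parts.count 1 < p).card : ℤ) - l.parts.count 1

/-- `crankM m n` is the crank counting function `M(m, n)`: the number of partitions
of `n` with crank `m`, with the standard convention at `n = 1`
(`M(0,1) = -1`, `M(±1,1) = 1`, `M(m,1) = 0` otherwise). -/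
noncomputable def crankM (m : ℤ) (n : ℕ) : ℤ :=
  if n = 1 then (if m = 0 then -1 else if m.natAbs = 1 then 1 else 0)
  else (Nat.card {l : n.Partition // crank l = m} : ℤ)

/-- `alphaBip s k = Σ_{ℓ ≥ 0} (-1)^ℓ p(k - ℓ(ℓ+1)/2 - ℓ s)`. -/
noncomputable def alphaBip (s k : ℕ) : ℤ :=
  ∑' ℓ : ℕ, (-1 : ℤ) ^ ℓ *
    (partitionCountInt ((k : ℤ) - ℓ * (ℓ + 1) / 2 - ℓ * s) : ℤ)

/-- `Dbip m n = π(m,n) - π(m-1,n)`, with `π(-1,n) := 0`. -/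
noncomputable def Dbip (m n : ℕ) : ℤ :=
  (bipartitePi m n : ℤ) - if m = 0 then 0 else (bipartitePi (m - 1) n : ℤ)

/-!
A steadily decreasing pair is a partition of a bipartite number into parts `(i + 1, i)`,
`(i, i + 1)` and `(2 i, 2 i)`, so that `D (m, n)` counts the triples of partitions of total size `n`
(the third into even parts) whose first two members differ by `m - n` in number of parts. By
summing this count cumulatively and using the symmetry `π (m, n) = π (n, m)`, its generating
function in `n`, for `|m - n| = s`, becomes `q ^ s` times `∏ (1 - q ^ i)⁻² (1 - q ^ (2 i))⁻¹` times
a partial theta function in `(q ^ s, q)`.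

The coefficient is extracted by Cauchy's formula on `|q| = exp (-t)` with `t = √(5π²/(12μ))`. On the
central arc the modular transformation of the Dedekind eta function gives the size of the product,
the partial theta function at `q = exp (-τ)` is asymptotic to `τ / (1 + q ^ s) ^ 2` uniformly in
`s`, and Laplace's method evaluates the integral; on the rest of the circle the product is
exponentially smaller than at `q = exp (-t)`.
-/

namespace BipartiteAsymptotics

open Filter Topology
open scoped Real Complex
open Complex (I)

section FinitelySupported

lemma eventually_eq_zero (u : ℕ →₀ ℕ) : ∀ᶠ i in atTop, u i = 0 := by
  rw [← Nat.cofinite_eq_atTop]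
  exact u.hasFiniteSupport

/-- An eventually vanishing sequence, bundled as a finitely supported function. -/
noncomputable def ofEventuallyZero (f : ℕ → ℕ) (hf : ∀ᶠ i in atTop, f i = 0) : ℕ →₀ ℕ :=
  Finsupp.ofSupportFinite f (by rwa [← Nat.cofinite_eq_atTop] at hf)

@[simp] lemma ofEventuallyZero_apply (f : ℕ → ℕ) (hf : ∀ᶠ i in atTop, f i = 0) (i : ℕ) :
    ofEventuallyZero f hf i = f i := rfl

lemma weight_eq_sum_range (w : ℕ → ℕ) (u : ℕ →₀ ℕ) {K : ℕ} (hK : ∀ i, K ≤ i → u i = 0) :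
    Finsupp.weight w u = ∑ i ∈ range K, u i * w i := by
  rw [Finsupp.weight_apply]
  refine Finsupp.sum_of_support_subset _ (fun i hi => ?_) _ (by simp)
  contrapose! hi
  simpa using hK i (by simpa using hi)

lemma weight_add_weights (w w' : ℕ → ℕ) (u : ℕ →₀ ℕ) :
    Finsupp.weight (fun i => w i + w' i) u = Finsupp.weight w u + Finsupp.weight w' u := by
  simp only [Finsupp.weight_apply, smul_add, Finsupp.sum_add]

lemma weight_succ_eq_add_degree (w : ℕ → ℕ) (u : ℕ →₀ ℕ) :
    Finsupp.weight (fun i => w i + 1) u = Finsupp.weight w u + u.degree := by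
  rw [weight_add_weights, Finsupp.degree_eq_weight_one]

lemma weight_const_mul (k : ℕ) (w : ℕ → ℕ) (u : ℕ →₀ ℕ) :
    Finsupp.weight (fun i => k * w i) u = k * Finsupp.weight w u := by
  simp only [Finsupp.weight_apply, Finsupp.mul_sum, smul_eq_mul, mul_left_comm]

lemma finite_setOf_weight_le {w : ℕ → ℕ} (hw : ∀ i, i < w i) (n : ℕ) :
    {u : ℕ →₀ ℕ | Finsupp.weight w u ≤ n}.Finite := by
  refine (Set.finite_Iic (ofEventuallyZero (fun i => if i < n then n else 0)
    (eventually_atTop.2 ⟨n, fun i hi => if_neg hi.not_gt⟩))).subset fun u hu i => ?_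
  have hui : u i ≤ n := (Finsupp.le_weight w (hw i).ne_bot u).trans hu
  rw [ofEventuallyZero_apply]
  split_ifs with hin
  · exact hui
  · by_contra hne
    have := Finsupp.le_weight_of_ne_zero' w (s := i) (f := u) (by simpa using hne)
    exact hin ((hw i).trans_le (this.trans hu))

/-- `tailSum x i = ∑_{k ≥ i} x k`. -/
noncomputable def tailSum (x : ℕ →₀ ℕ) (i : ℕ) : ℕ := ∑ k ∈ x.support with i ≤ k, x k

lemma tailSum_eq_add_tailSum_succ (x : ℕ →₀ ℕ) (i : ℕ) :
    tailSum x i = x i + tailSum x (i + 1) := by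
  simp only [tailSum, sum_filter]
  rw [← Finsupp.sum_ite_self_eq x i, Finsupp.sum, ← sum_add_distrib]
  refine sum_congr rfl fun k _ => ?_
  split_ifs <;> omega

lemma eventually_tailSum_eq_zero (x : ℕ →₀ ℕ) : ∀ᶠ i in atTop, tailSum x i = 0 := by
  obtain ⟨K, hK⟩ := eventually_atTop.1 (eventually_eq_zero x)
  filter_upwards [eventually_ge_atTop K] with i hi
  exact sum_eq_zero fun k hk => hK k (hi.trans (mem_filter.1 hk).2)

lemma eq_of_backward_recursion {x M M' : ℕ → ℕ} (hM : ∀ i, M i = x i + M (i + 1))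
    (hM' : ∀ i, M' i = x i + M' (i + 1)) (h : ∀ᶠ i in atTop, M i = M' i) (i : ℕ) :
    M i = M' i := by
  obtain ⟨K, hK⟩ := eventually_atTop.1 h
  rcases le_total i K with hi | hi
  · induction hi using Nat.decreasingInduction with
    | self => exact hK K le_rfl
    | of_succ i _ ih => rw [hM, hM', ih]
  · exact hK i hi

lemma sum_range_two_mul (f : ℕ → ℕ) (K : ℕ) :
    ∑ i ∈ range (2 * K), f i = ∑ i ∈ range K, (f (2 * i) + f (2 * i + 1)) := by
  induction K with
  | zero => simp
  | succ K ih =>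
    rw [Nat.mul_succ, sum_range_succ, sum_range_succ, ih, sum_range_succ, add_assoc]

end FinitelySupported

section SteadyPairs

variable {a b : ℕ → ℕ}

lemma steadilyDecreasing_symm (h : SteadilyDecreasing a b) : SteadilyDecreasing b a := fun i => by
  rw [min_comm, max_comm]
  exact h i

/-- The drop from the smaller `k`-th part to the larger `(k + 1)`-st part of a steadily
decreasing pair. -/
def gap (a b : ℕ → ℕ) (k : ℕ) : ℕ := min (a k) (b k) - max (a (k + 1)) (b (k + 1))

lemma gap_comm (a b : ℕ → ℕ) (k : ℕ) : gap a b k = gap b a k := by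
  rw [gap, gap, min_comm, max_comm]

lemma max_eq_gap_add (h : SteadilyDecreasing a b) (i : ℕ) :
    max (a i) (b i) =
      gap a b i + ((a i - b i) + (b i - a i)) + max (a (i + 1)) (b (i + 1)) := by
  have := h i
  unfold gap
  omega

lemma fst_eq_gap_add (h : SteadilyDecreasing a b) (i : ℕ) :
    a i = gap a b i + (a i - b i) + max (a (i + 1)) (b (i + 1)) := by
  have := h i
  unfold gap
  omega

/-- Summation by parts: the `k`-th drop of the pair contributes to the first `k + 1` parts. -/
lemma sum_range_eq_sum_gap (h : SteadilyDecreasing a b) (K : ℕ) :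
    ∑ i ∈ range K, a i = ∑ i ∈ range K, (i + 1) * gap a b i
      + ∑ i ∈ range K, (i * ((a i - b i) + (b i - a i)) + (a i - b i))
      + K * max (a K) (b K) := by
  induction K with
  | zero => simp
  | succ K ih =>
    have hfst := fst_eq_gap_add h K
    rw [sum_range_succ, ih, sum_range_succ, sum_range_succ, max_eq_gap_add h K]
    linear_combination hfst

end SteadyPairs

/-- Triples `(u, v, g)` of multiplicity sequences; entry `i` is the number of copies of the
bipartite part `(i + 1, i)` in `u`, of `(i, i + 1)` in `v` and of `(2 (i + 1), 2 (i + 1))` in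
`g`. -/
abbrev MultTriple : Type := (ℕ →₀ ℕ) × (ℕ →₀ ℕ) × (ℕ →₀ ℕ)

section Bijection

/-- The first coordinate of the bipartite number partitioned by a triple. -/
noncomputable def leftTotal (t : MultTriple) : ℕ :=
  Finsupp.weight (fun i => i + 1) t.1 + Finsupp.weight (fun i => i) t.2.1
    + Finsupp.weight (fun i => 2 * (i + 1)) t.2.2

/-- The second coordinate of the bipartite number partitioned by a triple. -/
noncomputable def rightTotal (t : MultTriple) : ℕ :=
  Finsupp.weight (fun i => i) t.1 + Finsupp.weight (fun i => i + 1) t.2.1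
    + Finsupp.weight (fun i => 2 * (i + 1)) t.2.2

/-- Exchange of the first two entries of a triple. -/
def swapTriple : MultTriple ≃ MultTriple where
  toFun t := (t.2.1, t.1, t.2.2)
  invFun t := (t.2.1, t.1, t.2.2)
  left_inv _ := rfl
  right_inv _ := rfl

lemma leftTotal_swapTriple (t : MultTriple) : leftTotal (swapTriple t) = rightTotal t := by
  simp only [leftTotal, rightTotal, swapTriple, Equiv.coe_fn_mk]
  ring

lemma eventually_gap_eq_zero (p : (ℕ →₀ ℕ) × (ℕ →₀ ℕ)) :
    ∀ᶠ i in atTop, gap p.1 p.2 i = 0 := by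
  filter_upwards [eventually_eq_zero p.1] with i hi
  simp [gap, hi]

lemma tendsto_two_mul_atTop : Tendsto (fun i : ℕ => 2 * i) atTop atTop :=
  tendsto_id.const_mul_atTop' two_pos

/-- The triple encoding a steadily decreasing pair `(a, b)`. Its drop at `2 i` is the bipartite
number `(2 i + 1, 2 i + 1) = (i + 1, i) + (i, i + 1)`, its drop at `2 i + 1` is
`(2 i + 2, 2 i + 2)`, and an excess of `a i` over `b i` is a multiple of `(i + 1, i)`. -/
noncomputable def toTriple (p : (ℕ →₀ ℕ) × (ℕ →₀ ℕ)) : MultTriple :=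
  have hgap := tendsto_two_mul_atTop.eventually (eventually_gap_eq_zero p)
  (ofEventuallyZero (fun i => gap p.1 p.2 (2 * i) + (p.1 i - p.2 i)) (by
      filter_upwards [hgap, eventually_eq_zero p.1] with i h₁ h₂
      simp [h₁, h₂]),
   ofEventuallyZero (fun i => gap p.1 p.2 (2 * i) + (p.2 i - p.1 i)) (by
      filter_upwards [hgap, eventually_eq_zero p.2] with i h₁ h₂
      simp [h₁, h₂]),
   ofEventuallyZero (fun i => gap p.1 p.2 (2 * i + 1))
      (((tendsto_add_atTop_nat 1).comp tendsto_two_mul_atTop).eventually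
        (eventually_gap_eq_zero p)))

variable {p p' : (ℕ →₀ ℕ) × (ℕ →₀ ℕ)}

lemma toTriple_fst (p : (ℕ →₀ ℕ) × (ℕ →₀ ℕ)) (i : ℕ) :
    (toTriple p).1 i = gap p.1 p.2 (2 * i) + (p.1 i - p.2 i) := rfl

lemma toTriple_snd (p : (ℕ →₀ ℕ) × (ℕ →₀ ℕ)) (i : ℕ) :
    (toTriple p).2.1 i = gap p.1 p.2 (2 * i) + (p.2 i - p.1 i) := rfl

lemma toTriple_thd (p : (ℕ →₀ ℕ) × (ℕ →₀ ℕ)) (i : ℕ) :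
    (toTriple p).2.2 i = gap p.1 p.2 (2 * i + 1) := rfl

lemma toTriple_swap (p : (ℕ →₀ ℕ) × (ℕ →₀ ℕ)) :
    toTriple p.swap = swapTriple (toTriple p) := by
  refine Prod.ext ?_ (Prod.ext ?_ ?_) <;> ext i <;>
    simp [swapTriple, toTriple_fst, toTriple_snd, toTriple_thd, gap_comm]

lemma leftTotal_toTriple (h : SteadilyDecreasing p.1 p.2) :
    leftTotal (toTriple p) = p.1.degree := by
  obtain ⟨K, hK⟩ := eventually_atTop.1 ((eventually_eq_zero p.1).and (eventually_eq_zero p.2))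
  have hgap (i : ℕ) (hi : K ≤ i) : gap p.1 p.2 i = 0 := by simp [gap, hK i hi]
  have hdegree : p.1.degree = ∑ i ∈ range (2 * K), p.1 i := by
    rw [Finsupp.degree_eq_weight_one, weight_eq_sum_range (K := 2 * K) _ _
      fun i hi => (hK i (by omega)).1]
    simp
  have hdiff : ∑ i ∈ range (2 * K),
        (i * ((p.1 i - p.2 i) + (p.2 i - p.1 i)) + (p.1 i - p.2 i))
      = ∑ i ∈ range K, (i * ((p.1 i - p.2 i) + (p.2 i - p.1 i)) + (p.1 i - p.2 i)) := by
    refine (sum_subset (range_subset_range.2 (by omega)) fun i _ hi => ?_).symm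
    simp [hK i (by simpa using hi)]
  rw [hdegree, sum_range_eq_sum_gap h, hdiff, sum_range_two_mul, (hK (2 * K) (by omega)).1,
    (hK (2 * K) (by omega)).2, leftTotal,
    weight_eq_sum_range (K := K) _ _ fun i hi => by
      simp [toTriple_fst, hgap (2 * i) (by omega), (hK i hi).1],
    weight_eq_sum_range (K := K) _ _ fun i hi => by
      simp [toTriple_snd, hgap (2 * i) (by omega), (hK i hi).2],
    weight_eq_sum_range (K := K) _ _ fun i hi => hgap (2 * i + 1) (by omega),
    max_self, mul_zero, add_zero, ← sum_add_distrib, ← sum_add_distrib, ← sum_add_distrib]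
  refine sum_congr rfl fun i _ => ?_
  rw [toTriple_fst, toTriple_snd, toTriple_thd]
  ring

lemma rightTotal_toTriple (h : SteadilyDecreasing p.1 p.2) :
    rightTotal (toTriple p) = p.2.degree := by
  rw [← leftTotal_swapTriple, ← toTriple_swap,
    leftTotal_toTriple (p := p.swap) (steadilyDecreasing_symm h), Prod.fst_swap]

lemma toTriple_injOn : Set.InjOn toTriple {p | SteadilyDecreasing p.1 p.2} := by
  intro p hp p' hp' h
  have hfst (i : ℕ) : gap p.1 p.2 (2 * i) + (p.1 i - p.2 i)
      = gap p'.1 p'.2 (2 * i) + (p'.1 i - p'.2 i) := DFunLike.congr_fun (congrArg Prod.fst h) i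
  have hsnd (i : ℕ) : gap p.1 p.2 (2 * i) + (p.2 i - p.1 i)
      = gap p'.1 p'.2 (2 * i) + (p'.2 i - p'.1 i) :=
    DFunLike.congr_fun (congrArg (fun t => t.2.1) h) i
  have hthd (i : ℕ) : gap p.1 p.2 (2 * i + 1) = gap p'.1 p'.2 (2 * i + 1) :=
    DFunLike.congr_fun (congrArg (fun t => t.2.2) h) i
  have hgap (k : ℕ) : gap p.1 p.2 k = gap p'.1 p'.2 k := by
    rcases Nat.even_or_odd' k with ⟨i, rfl | rfl⟩
    · have := hfst i
      have := hsnd i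
      omega
    · exact hthd i
  have hdiff (i : ℕ) : p.1 i - p.2 i = p'.1 i - p'.2 i ∧ p.2 i - p.1 i = p'.2 i - p'.1 i := by
    have := hfst i
    have := hsnd i
    have := hgap (2 * i)
    omega
  have hmax := eq_of_backward_recursion (M' := fun i => max (p'.1 i) (p'.2 i)) (max_eq_gap_add hp)
    (fun i => by simp only [max_eq_gap_add hp' i, hgap, hdiff]) (by
      filter_upwards [eventually_eq_zero p.1, eventually_eq_zero p.2, eventually_eq_zero p'.1,
        eventually_eq_zero p'.2] with i h₁ h₂ h₃ h₄
      simp only [h₁, h₂, h₃, h₄])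
  ext i <;> have := hdiff i <;> have := hmax i <;> omega

/-- The drops of the pair encoded by a triple. -/
noncomputable def tripleGap (t : MultTriple) : ℕ →₀ ℕ :=
  have hhalf := Nat.tendsto_div_const_atTop two_ne_zero
  ofEventuallyZero (fun k => if Even k then min (t.1 (k / 2)) (t.2.1 (k / 2)) else t.2.2 (k / 2))
    (by filter_upwards [hhalf.eventually (eventually_eq_zero t.1),
          hhalf.eventually (eventually_eq_zero t.2.2)] with k h₁ h₂
        simp [h₁, h₂])

lemma tripleGap_apply (t : MultTriple) (k : ℕ) :
    tripleGap t k = if Even k then min (t.1 (k / 2)) (t.2.1 (k / 2)) else t.2.2 (k / 2) := rfl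

lemma tripleGap_two_mul (t : MultTriple) (i : ℕ) :
    tripleGap t (2 * i) = min (t.1 i) (t.2.1 i) := by
  simp [tripleGap_apply]

lemma tripleGap_two_mul_add_one (t : MultTriple) (i : ℕ) :
    tripleGap t (2 * i + 1) = t.2.2 i := by
  simp [tripleGap_apply, Nat.mul_add_div]

lemma exists_toTriple_eq (t : MultTriple) :
    ∃ p : (ℕ →₀ ℕ) × (ℕ →₀ ℕ), SteadilyDecreasing p.1 p.2 ∧ toTriple p = t := by
  obtain ⟨u, v, g⟩ := t
  set F := tripleGap (u, v, g) with hF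
  set M := tailSum (F + ((u - v) + (v - u)))
  have hM_succ (i : ℕ) : M i = F i + ((u i - v i) + (v i - u i)) + M (i + 1) :=
    tailSum_eq_add_tailSum_succ _ i
  have hM_zero : ∀ᶠ i in atTop, M i = 0 := eventually_tailSum_eq_zero _
  let a := ofEventuallyZero (fun i => M i - (v i - u i)) (hM_zero.mono fun i hi => by simp [hi])
  let b := ofEventuallyZero (fun i => M i - (u i - v i)) (hM_zero.mono fun i hi => by simp [hi])
  have ha (i : ℕ) : a i = M i - (v i - u i) := rfl
  have hb (i : ℕ) : b i = M i - (u i - v i) := rfl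
  have hmax (i : ℕ) : max (a i) (b i) = M i := by
    rw [ha, hb]
    omega
  have hmin (i : ℕ) : min (a i) (b i) = M (i + 1) + F i := by
    rw [ha, hb, hM_succ]
    omega
  have hgap (i : ℕ) : gap a b i = F i := by
    rw [gap, hmax, hmin, Nat.add_sub_cancel_left]
  refine ⟨(a, b), fun i => by simp only [hmax, hmin]; omega, Prod.ext ?_ (Prod.ext ?_ ?_)⟩ <;>
    ext i
  · rw [toTriple_fst, hgap, hF, tripleGap_two_mul, ha, hb, hM_succ]
    dsimp only
    omega
  · rw [toTriple_snd, hgap, hF, tripleGap_two_mul, ha, hb, hM_succ]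
    dsimp only
    omega
  · rw [toTriple_thd, hgap, hF, tripleGap_two_mul_add_one]

lemma bipartitePi_eq_card_totals (m n : ℕ) :
    bipartitePi m n = Nat.card {t : MultTriple // leftTotal t = m ∧ rightTotal t = n} := by
  refine Nat.card_congr (Equiv.ofBijective (fun p => ⟨toTriple p.1, ?_⟩) ⟨?_, ?_⟩)
  · obtain ⟨p, -, -, hp, hm, hn⟩ := p
    exact ⟨(leftTotal_toTriple hp).trans hm, (rightTotal_toTriple hp).trans hn⟩
  · rintro ⟨p, _, _, hp, _⟩ ⟨p', _, _, hp', _⟩ h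
    exact Subtype.ext (toTriple_injOn hp hp' (congrArg Subtype.val h))
  · rintro ⟨t, hm, hn⟩
    obtain ⟨p, hp, rfl⟩ := exists_toTriple_eq t
    refine ⟨⟨p, fun i => ?_, fun i => ?_, hp, (leftTotal_toTriple hp).symm.trans hm,
      (rightTotal_toTriple hp).symm.trans hn⟩, rfl⟩ <;> have := hp i <;> omega

lemma bipartitePi_comm (m n : ℕ) : bipartitePi m n = bipartitePi n m := by
  rw [bipartitePi_eq_card_totals, bipartitePi_eq_card_totals]
  refine Nat.card_congr (swapTriple.subtypeEquiv fun t => ?_)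
  rw [leftTotal_swapTriple, ← leftTotal_swapTriple (swapTriple t), and_comm]
  rfl

end Bijection

section Shift

/-- Prepend an entry to a finitely supported sequence. -/
noncomputable def consEquiv : ℕ × (ℕ →₀ ℕ) ≃ (ℕ →₀ ℕ) where
  toFun x := Finsupp.single 0 x.1 + x.2.mapDomain Nat.succ
  invFun u := (u 0, u.comapDomain Nat.succ Nat.succ_injective.injOn)
  left_inv x := Prod.ext (by simp [Finsupp.mapDomain_of_notMem_range]) (by
    ext i
    simp [Finsupp.mapDomain_apply Nat.succ_injective])
  right_inv u := by
    ext i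
    cases i with
    | zero => simp [Finsupp.mapDomain_of_notMem_range]
    | succ i => simp [Finsupp.mapDomain_apply Nat.succ_injective]

lemma weight_consEquiv (w : ℕ → ℕ) (k : ℕ) (u : ℕ →₀ ℕ) :
    Finsupp.weight w (consEquiv (k, u)) = k * w 0 + Finsupp.weight (fun i => w (i + 1)) u := by
  change Finsupp.weight w (Finsupp.single 0 k + u.mapDomain Nat.succ) = _
  rw [map_add, Finsupp.weight_single, Finsupp.weight_apply w,
    Finsupp.sum_mapDomain_index (h := fun i c => c • w i) (fun _ => zero_smul _ _)
      (fun _ _ _ => add_smul _ _ _), Finsupp.weight_apply, smul_eq_mul]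

end Shift

section CrankCounts

/-- The number partitioned by a triple whose entries count the parts `i + 1`, `i + 1`
and `2 (i + 1)`. -/
noncomputable def size (t : MultTriple) : ℕ :=
  Finsupp.weight (fun i => i + 1) t.1 + Finsupp.weight (fun i => i + 1) t.2.1
    + Finsupp.weight (fun i => 2 * (i + 1)) t.2.2

/-- The crank statistic: the number of parts of the first kind minus that of the second kind. -/
noncomputable def tripleCrank (t : MultTriple) : ℤ := (t.1.degree : ℤ) - t.2.1.degree

lemma rightTotal_cons (k : ℕ) (t : MultTriple) :
    rightTotal (consEquiv (k, t.1), t.2) = size t := by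
  simp [rightTotal, size, weight_consEquiv]

lemma leftTotal_cons (k : ℕ) (t : MultTriple) :
    (leftTotal (consEquiv (k, t.1), t.2) : ℤ) = size t + k + tripleCrank t := by
  simp only [leftTotal, size, tripleCrank, weight_consEquiv, weight_succ_eq_add_degree]
  push_cast
  ring

/-- The multiplicity of the part `(1, 0)` is determined by the rest of the triple. -/
lemma bipartitePi_eq_card_crank_le (m n : ℕ) :
    bipartitePi m n = Nat.card {t : MultTriple // size t = n ∧ tripleCrank t ≤ m - n} := by
  rw [bipartitePi_eq_card_totals]
  let e : ℕ × MultTriple ≃ MultTriple :=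
    (Equiv.prodAssoc _ _ _).symm.trans (Equiv.prodCongr consEquiv (Equiv.refl _))
  have hleft (x : ℕ × MultTriple) : (leftTotal (e x) : ℤ) = size x.2 + x.1 + tripleCrank x.2 :=
    leftTotal_cons x.1 x.2
  have hright (x : ℕ × MultTriple) : rightTotal (e x) = size x.2 := rightTotal_cons x.1 x.2
  rw [← Nat.card_congr (e.subtypeEquiv (p := fun x => leftTotal (e x) = m ∧ rightTotal (e x) = n)
    fun _ => Iff.rfl)]
  refine Nat.card_congr (Equiv.ofBijective (fun x => ⟨x.1.2, ?_⟩) ⟨?_, ?_⟩)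
  · have := hleft x
    have := hright x
    have := x.2
    omega
  · rintro ⟨⟨k, t⟩, hm, hn⟩ ⟨⟨k', t'⟩, hm', hn'⟩ h
    obtain rfl : t = t' := congrArg Subtype.val h
    have := hleft (k, t)
    have := hleft (k', t)
    obtain rfl : k = k' := by dsimp only at *; omega
    rfl
  · rintro ⟨t, hn, hm⟩
    have hl := hleft ((m - n - tripleCrank t).toNat, t)
    have hr := hright ((m - n - tripleCrank t).toNat, t)
    exact ⟨⟨((m - n - tripleCrank t).toNat, t),
      by dsimp only at *; omega, by dsimp only at *; omega⟩, rfl⟩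

lemma size_swapTriple (t : MultTriple) : size (swapTriple t) = size t := by
  simp only [size, swapTriple, Equiv.coe_fn_mk]
  ring

lemma tripleCrank_swapTriple (t : MultTriple) : tripleCrank (swapTriple t) = -tripleCrank t := by
  simp [tripleCrank, swapTriple]

lemma finite_setOf_size_eq (n : ℕ) : {t : MultTriple | size t = n}.Finite := by
  have hfin := finite_setOf_weight_le (w := fun i => i + 1) (fun i => by omega) n
  refine (hfin.prod (hfin.prod
    (finite_setOf_weight_le (w := fun i => 2 * (i + 1)) (fun i => by omega) n))).subset ?_
  rintro ⟨u, v, g⟩ h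
  simp only [Set.mem_ofPred_eq, size] at h
  refine ⟨?_, ?_, ?_⟩ <;> change Finsupp.weight _ _ ≤ n <;> dsimp only <;> omega

/-- The triples of size `n`. -/
noncomputable def triplesOfSize (n : ℕ) : Finset MultTriple := (finite_setOf_size_eq n).toFinset

lemma mem_triplesOfSize {n : ℕ} {t : MultTriple} : t ∈ triplesOfSize n ↔ size t = n := by
  simp [triplesOfSize]

/-- The number of triples of size `n` and crank at most `s`. -/
noncomputable def crankLeCount (n : ℕ) (s : ℤ) : ℕ := #{t ∈ triplesOfSize n | tripleCrank t ≤ s}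

/-- The number of triples of size `n` and crank `s`. -/
noncomputable def crankCount (n : ℕ) (s : ℤ) : ℕ := #{t ∈ triplesOfSize n | tripleCrank t = s}

lemma crankLeCount_le (n : ℕ) (s : ℤ) : crankLeCount n s ≤ #(triplesOfSize n) :=
  card_filter_le _ _

lemma card_filter_crank_neg (n : ℕ) (P : ℤ → Prop) [DecidablePred P] :
    #{t ∈ triplesOfSize n | P (-tripleCrank t)} = #{t ∈ triplesOfSize n | P (tripleCrank t)} :=
  card_equiv swapTriple fun t => by
    simp only [mem_filter, mem_triplesOfSize, size_swapTriple, tripleCrank_swapTriple]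

lemma crankCount_neg (n : ℕ) (s : ℤ) : crankCount n (-s) = crankCount n s := by
  simpa only [crankCount, neg_inj] using
    (card_filter_crank_neg n (· = -s)).symm

lemma crankLeCount_add_crankLeCount (n : ℕ) (s : ℤ) :
    crankLeCount n s + crankLeCount n (-s - 1) = #(triplesOfSize n) := by
  have hcompl : crankLeCount n (-s - 1) = #{t ∈ triplesOfSize n | ¬ tripleCrank t ≤ s} := by
    rw [crankLeCount, ← card_filter_crank_neg n (· ≤ -s - 1)]
    exact congrArg card (filter_congr fun t _ => by omega)
  rw [hcompl]
  exact card_filter_add_card_filter_not _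

lemma crankLeCount_eq_add (n : ℕ) (s : ℤ) :
    crankLeCount n s = crankCount n s + crankLeCount n (s - 1) := by
  rw [crankLeCount, crankCount, crankLeCount, ← card_union_of_disjoint, ← filter_or]
  · exact congrArg card (filter_congr fun t _ => by omega)
  · exact disjoint_filter.2 fun t _ h => by omega

lemma neg_le_tripleCrank {n : ℕ} {t : MultTriple} (ht : t ∈ triplesOfSize n) :
    -(n : ℤ) ≤ tripleCrank t := by
  rw [mem_triplesOfSize, size, weight_succ_eq_add_degree (fun i => i) t.2.1] at ht
  rw [tripleCrank]
  omega

lemma crankLeCount_eq_zero {n : ℕ} {s : ℤ} (h : s < -n) : crankLeCount n s = 0 := by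
  rw [crankLeCount, card_eq_zero, filter_eq_empty_iff]
  intro t ht
  have := neg_le_tripleCrank ht
  omega

lemma bipartitePi_eq_crankLeCount (m n : ℕ) : bipartitePi m n = crankLeCount n (m - n) := by
  rw [bipartitePi_eq_card_crank_le, crankLeCount]
  exact Nat.subtype_card _ fun t => by rw [mem_filter, mem_triplesOfSize]

theorem Dbip_eq_crankCount (m n : ℕ) : Dbip m n = crankCount n (m - n) := by
  rw [Dbip, bipartitePi_eq_crankLeCount, crankLeCount_eq_add]
  split_ifs with hm
  · rw [crankLeCount_eq_zero (s := (m : ℤ) - n - 1) (by omega)]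
    simp
  · rw [bipartitePi_eq_crankLeCount, Nat.cast_sub (by omega), Nat.cast_one, sub_right_comm]
    push_cast
    ring

/-- The symmetry `π(n - s, n) = π(n, n - s)` read on both sides as a crank count. -/
lemma crankLeCount_neg (n s : ℕ) :
    crankLeCount n (-s) = if s ≤ n then crankLeCount (n - s) s else 0 := by
  split_ifs with h
  · have hcomm := bipartitePi_comm (n - s) n
    rw [bipartitePi_eq_crankLeCount, bipartitePi_eq_crankLeCount, Nat.cast_sub h,
      sub_sub_cancel, sub_sub_cancel_left] at hcomm
    exact hcomm
  · exact crankLeCount_eq_zero (by omega)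

lemma card_triplesOfSize_eq_add (n s : ℕ) : #(triplesOfSize n) = crankLeCount n s +
    if s + 1 ≤ n then crankLeCount (n - (s + 1)) (s + 1 : ℕ) else 0 := by
  rw [← crankLeCount_neg, ← crankLeCount_add_crankLeCount n s]
  push_cast
  ring_nf

lemma crankCount_add_card_triplesOfSize (n s : ℕ) : crankCount n s + #(triplesOfSize n) =
    crankLeCount n s + if s ≤ n then crankLeCount (n - s) s else 0 := by
  rw [← crankLeCount_neg, crankLeCount_eq_add n s, ← crankLeCount_add_crankLeCount n (s - 1)]
  ring_nf

end CrankCounts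

section EulerProduct

variable {𝕜 : Type*} [NormedField 𝕜]

lemma summable_norm_and_hasSum_fin_prod_pow [CompleteSpace 𝕜] {K : ℕ} (f : Fin K → 𝕜)
    (hf : ∀ i, ‖f i‖ < 1) :
    Summable (fun u : Fin K → ℕ => ‖∏ i, f i ^ u i‖) ∧
      HasSum (fun u : Fin K → ℕ => ∏ i, f i ^ u i) (∏ i, (1 - f i)⁻¹) := by
  induction K with
  | zero => exact ⟨(hasSum_fintype _).summable, by simp⟩
  | succ K ih =>
    obtain ⟨htail_norm, htail⟩ := ih (fun i => f i.succ) fun i => hf i.succ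
    have hcons (x : ℕ × (Fin K → ℕ)) :
        ∏ i, f i ^ Fin.consEquiv (fun _ => ℕ) x i = f 0 ^ x.1 * ∏ i, f (Fin.succ i) ^ x.2 i := by
      rw [Fin.prod_univ_succ]
      rfl
    have hnorm := (summable_norm_geometric_of_norm_lt_one (hf 0)).mul_norm htail_norm
    have hsum := (hasSum_geometric_of_norm_lt_one (hf 0)).mul htail hnorm.of_norm
    rw [← Fin.prod_univ_succ fun i => (1 - f i)⁻¹] at hsum
    rw [← (Fin.consEquiv fun _ => ℕ).summable_iff, ← (Fin.consEquiv fun _ => ℕ).hasSum_iff]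
    exact ⟨hnorm.congr fun x => by rw [Function.comp_apply, hcons],
      hsum.congr_fun fun x => by rw [Function.comp_apply, hcons]⟩

/-- Extension of a finite tuple by zeros. -/
noncomputable def extendByZero {K : ℕ} (u : Fin K → ℕ) : ℕ →₀ ℕ :=
  (Finsupp.equivFunOnFinite.symm u).embDomain Fin.valEmbedding

lemma extendByZero_injective (K : ℕ) :
    Function.Injective (extendByZero : (Fin K → ℕ) → (ℕ →₀ ℕ)) :=
  (Finsupp.embDomain_injective _).comp Finsupp.equivFunOnFinite.symm.injective

lemma eventually_mem_range_extendByZero (u : ℕ →₀ ℕ) :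
    ∀ᶠ K in atTop, u ∈ Set.range (extendByZero : (Fin K → ℕ) → (ℕ →₀ ℕ)) := by
  filter_upwards [eventually_gt_atTop (u.support.sup id)] with K hK
  have hsupp : (u.support : Set ℕ) ⊆ Set.range (Fin.valEmbedding : Fin K ↪ ℕ) := fun i hi =>
    ⟨⟨i, (le_sup (f := id) hi).trans_lt hK⟩, rfl⟩
  obtain ⟨v, rfl⟩ := (Finsupp.mem_range_embDomain_iff _ u).2 hsupp
  exact ⟨Finsupp.equivFunOnFinite v, by simp [extendByZero]⟩

lemma prod_pow_extendByZero (f : ℕ → 𝕜) {K : ℕ} (u : Fin K → ℕ) :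
    (extendByZero u).prod (fun i k => f i ^ k) = ∏ i : Fin K, f i ^ u i := by
  rw [extendByZero, Finsupp.prod_embDomain, Finsupp.prod_fintype _ _ fun i => pow_zero _]
  rfl

variable {f : ℕ → 𝕜}

lemma tprod_one_sub_ne_zero [CompleteSpace 𝕜] (hf : ∀ i, ‖f i‖ < 1)
    (hsum : Summable fun i => ‖f i‖) : ∏' i, (1 - f i) ≠ 0 := by
  simp only [sub_eq_add_neg]
  refine tprod_one_add_ne_zero_of_summable (fun i h => ?_) (by simpa only [norm_neg] using hsum)
  have hfi : f i = 1 := by linear_combination -h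
  simpa [hfi] using hf i

lemma tendsto_prod_inv_one_sub [CompleteSpace 𝕜] (hf : ∀ i, ‖f i‖ < 1)
    (hsum : Summable fun i => ‖f i‖) :
    Tendsto (fun K => ∏ i : Fin K, (1 - f i)⁻¹) atTop (𝓝 (∏' i, (1 - f i))⁻¹) := by
  have hmult : Multipliable fun i => 1 - f i := by
    simpa only [sub_eq_add_neg] using
      multipliable_one_add_of_summable (f := fun i => -f i) (by simpa only [norm_neg] using hsum)
  simpa only [Fin.prod_univ_eq_prod_range (fun i => (1 - f i)⁻¹)] using
    (hmult.hasProd.inv₀ (tprod_one_sub_ne_zero hf hsum)).tendsto_prod_nat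

lemma summable_norm_finsupp_prod_pow (hf : ∀ i, ‖f i‖ < 1) (hsum : Summable fun i => ‖f i‖) :
    Summable fun u : ℕ →₀ ℕ => ‖u.prod fun i k => f i ^ k‖ := by
  have hf' (i : ℕ) : ‖‖f i‖‖ < 1 := by simpa using hf i
  obtain ⟨C, hC⟩ := (tendsto_prod_inv_one_sub hf' (by simpa using hsum)).bddAbove_range
  refine summable_of_sum_le (c := C) (fun u => norm_nonneg _) fun S => ?_
  obtain ⟨K, hK⟩ := ((eventually_all_finset S).2
    fun u _ => eventually_mem_range_extendByZero u).exists
  have hinj := (extendByZero_injective K).injOn (s := extendByZero ⁻¹' S)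
  have hfin := (summable_norm_and_hasSum_fin_prod_pow (fun i : Fin K => ‖f i‖) fun i => hf' i).2
  calc ∑ u ∈ S, ‖u.prod fun i k => f i ^ k‖
      = ∑ v ∈ S.preimage extendByZero hinj, ∏ i : Fin K, ‖f i‖ ^ v i := by
        rw [← sum_preimage extendByZero S hinj _ fun u hu hu' => absurd (hK u hu) hu']
        simp [prod_pow_extendByZero]
    _ ≤ ∏ i : Fin K, (1 - ‖f i‖)⁻¹ := sum_le_hasSum _ (fun _ _ => by positivity) hfin
    _ ≤ C := hC ⟨K, rfl⟩

theorem hasSum_finsupp_prod_pow [CompleteSpace 𝕜] (hf : ∀ i, ‖f i‖ < 1)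
    (hsum : Summable fun i => ‖f i‖) :
    HasSum (fun u : ℕ →₀ ℕ => u.prod fun i k => f i ^ k) (∏' i, (1 - f i))⁻¹ := by
  have hs := summable_norm_finsupp_prod_pow hf hsum
  have hlim : Tendsto (fun K => ∑' u : ℕ →₀ ℕ, (Set.range (extendByZero (K := K))).indicator
      (fun u => u.prod fun i k => f i ^ k) u) atTop
      (𝓝 (∑' u : ℕ →₀ ℕ, u.prod fun i k => f i ^ k)) := by
    refine tendsto_tsum_of_dominated_convergence hs (fun u => ?_)
      (.of_forall fun K u => norm_indicator_le_norm_self _ _)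
    refine tendsto_const_nhds.congr' ?_
    filter_upwards [eventually_mem_range_extendByZero u] with K hK
    rw [Set.indicator_of_mem hK]
  have hpartial (K : ℕ) : ∑' u : ℕ →₀ ℕ, (Set.range (extendByZero (K := K))).indicator
      (fun u => u.prod fun i k => f i ^ k) u = ∏ i : Fin K, (1 - f i)⁻¹ := by
    rw [← _root_.tsum_subtype,
      tsum_range (fun u => u.prod fun i k => f i ^ k) (extendByZero_injective K)]
    simp only [prod_pow_extendByZero]
    exact (summable_norm_and_hasSum_fin_prod_pow _ fun i => hf i).2.tsum_eq
  simp only [hpartial] at hlim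
  rw [← tendsto_nhds_unique hlim (tendsto_prod_inv_one_sub hf hsum)]
  exact hs.of_norm.hasSum

end EulerProduct

section PartitionSeries

/-- Euler's function `∏ (1 - q ^ n)`, the product being over `n ≥ 1`. -/
noncomputable def eulerPhi (q : ℂ) : ℂ := ∏' n : ℕ, (1 - q ^ (n + 1))

variable {q : ℂ}

lemma norm_pow_succ_lt_one (hq : ‖q‖ < 1) (n : ℕ) : ‖q ^ (n + 1)‖ < 1 := by
  rw [norm_pow]
  exact pow_lt_one₀ (norm_nonneg _) hq n.succ_ne_zero

lemma summable_norm_pow_succ (hq : ‖q‖ < 1) : Summable fun n : ℕ => ‖q ^ (n + 1)‖ :=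
  (summable_nat_add_iff 1).2 (summable_norm_geometric_of_norm_lt_one hq)

lemma eulerPhi_ne_zero (hq : ‖q‖ < 1) : eulerPhi q ≠ 0 :=
  tprod_one_sub_ne_zero (f := fun n => q ^ (n + 1)) (norm_pow_succ_lt_one hq)
    (summable_norm_pow_succ hq)

lemma tendsto_prod_inv_eulerPhi (hq : ‖q‖ < 1) :
    Tendsto (fun K => ∏ i : Fin K, (1 - q ^ (i + 1 : ℕ))⁻¹) atTop (𝓝 (eulerPhi q)⁻¹) :=
  tendsto_prod_inv_one_sub (f := fun n => q ^ (n + 1)) (norm_pow_succ_lt_one hq)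
    (summable_norm_pow_succ hq)

lemma prod_pow_succ_pow (u : ℕ →₀ ℕ) :
    u.prod (fun i k => (q ^ (i + 1)) ^ k) = q ^ Finsupp.weight (fun i => i + 1) u := by
  rw [Finsupp.weight_apply, Finsupp.sum, ← prod_pow_eq_pow_sum, Finsupp.prod]
  simp only [← pow_mul, smul_eq_mul, mul_comm]

lemma summable_norm_pow_weight (hq : ‖q‖ < 1) :
    Summable fun u : ℕ →₀ ℕ => ‖q ^ Finsupp.weight (fun i => i + 1) u‖ := by
  simpa only [prod_pow_succ_pow] using
    summable_norm_finsupp_prod_pow (norm_pow_succ_lt_one hq) (summable_norm_pow_succ hq)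

lemma hasSum_pow_weight (hq : ‖q‖ < 1) :
    HasSum (fun u : ℕ →₀ ℕ => q ^ Finsupp.weight (fun i => i + 1) u) (eulerPhi q)⁻¹ :=
  (hasSum_finsupp_prod_pow (norm_pow_succ_lt_one hq) (summable_norm_pow_succ hq)).congr_fun
    fun u => (prod_pow_succ_pow u).symm

/-- The generating function of `MultTriple` by `size`. -/
noncomputable def tripleSeries (q : ℂ) : ℂ :=
  (eulerPhi q)⁻¹ * ((eulerPhi q)⁻¹ * (eulerPhi (q ^ 2))⁻¹)

lemma pow_size (q : ℂ) (t : MultTriple) :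
    q ^ size t = q ^ Finsupp.weight (fun i => i + 1) t.1 *
      (q ^ Finsupp.weight (fun i => i + 1) t.2.1 *
        (q ^ 2) ^ Finsupp.weight (fun i => i + 1) t.2.2) := by
  rw [size, weight_const_mul, pow_add, pow_add, pow_mul, mul_assoc]

lemma hasSum_pow_size (hq : ‖q‖ < 1) :
    HasSum (fun t : MultTriple => q ^ size t) (tripleSeries q) := by
  have hq₂ : ‖q ^ 2‖ < 1 := norm_pow_succ_lt_one hq 1
  have hnorm := summable_norm_pow_weight hq
  have hnorm₂ := hnorm.mul_norm (summable_norm_pow_weight hq₂)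
  have hprod := (hasSum_pow_weight hq).mul ((hasSum_pow_weight hq).mul (hasSum_pow_weight hq₂)
    hnorm₂.of_norm) (hnorm.mul_norm hnorm₂).of_norm
  exact hprod.congr_fun (pow_size q)

lemma hasSum_card_triplesOfSize (hq : ‖q‖ < 1) :
    HasSum (fun n => (#(triplesOfSize n) : ℂ) * q ^ n) (tripleSeries q) := by
  refine ((Equiv.sigmaFiberEquiv size).hasSum_iff.2 (hasSum_pow_size hq)).sigma fun n => ?_
  have hfiber : HasSum (fun _ : triplesOfSize n => q ^ n) (#(triplesOfSize n) * q ^ n) := by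
    simpa using hasSum_fintype (fun _ : triplesOfSize n => q ^ n)
  refine ((Equiv.subtypeEquivRight fun t => mem_triplesOfSize.symm).hasSum_iff.2 hfiber).congr_fun
    fun t => ?_
  exact congrArg (q ^ ·) t.2

lemma summable_card_triplesOfSize (hq : ‖q‖ < 1) :
    Summable fun n => (#(triplesOfSize n) : ℝ) * ‖q‖ ^ n := by
  have hq' : ‖(‖q‖ : ℂ)‖ < 1 := by simpa using hq
  rw [← Complex.summable_ofReal]
  simpa using (hasSum_card_triplesOfSize hq').summable

lemma norm_natCast_mul_pow_le {k l : ℕ} (h : k ≤ l) (q : ℂ) (n : ℕ) :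
    ‖(k : ℂ) * q ^ n‖ ≤ l * ‖q‖ ^ n := by
  rw [norm_mul, norm_pow, Complex.norm_natCast]
  gcongr

lemma hasSum_shift {a : ℕ → ℂ} {S : ℂ} (h : HasSum (fun n => a n * q ^ n) S) (k : ℕ) :
    HasSum (fun n => (if k ≤ n then a (n - k) else 0) * q ^ n) (q ^ k * S) := by
  rw [← (add_left_injective k).hasSum_iff]
  · refine (h.mul_left (q ^ k)).congr_fun fun n => ?_
    simp only [Function.comp_apply, if_pos (Nat.le_add_left k n), Nat.add_sub_cancel, pow_add]
    ring
  · intro n hn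
    rw [if_neg fun h => hn ⟨n - k, Nat.sub_add_cancel h⟩, zero_mul]

end PartitionSeries

section CrankSeries

/-- The generating function `∑ₙ #{t | size t = n ∧ tripleCrank t ≤ s} qⁿ`. -/
noncomputable def crankLeSeries (s : ℕ) (q : ℂ) : ℂ := ∑' n, (crankLeCount n s : ℂ) * q ^ n

variable {q : ℂ}

lemma hasSum_crankLeSeries (s : ℕ) (hq : ‖q‖ < 1) :
    HasSum (fun n => (crankLeCount n s : ℂ) * q ^ n) (crankLeSeries s q) :=
  (Summable.of_norm_bounded (summable_card_triplesOfSize hq)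
    fun n => norm_natCast_mul_pow_le (crankLeCount_le n s) q n).hasSum

lemma exists_norm_crankLeSeries_le (hq : ‖q‖ < 1) : ∃ B, ∀ s, ‖crankLeSeries s q‖ ≤ B :=
  ⟨_, fun s => tsum_of_norm_bounded (summable_card_triplesOfSize hq).hasSum
    fun n => norm_natCast_mul_pow_le (crankLeCount_le n s) q n⟩

lemma crankLeSeries_eq_sub (s : ℕ) (hq : ‖q‖ < 1) :
    crankLeSeries s q = tripleSeries q - q ^ (s + 1) * crankLeSeries (s + 1) q := by
  have hshift := hasSum_shift (hasSum_crankLeSeries (s + 1) hq) (s + 1)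
  refine (hasSum_crankLeSeries s hq).unique
    (((hasSum_card_triplesOfSize hq).sub hshift).congr_fun fun n => ?_)
  rw [card_triplesOfSize_eq_add n s]
  push_cast
  ring

lemma hasSum_crankCount_of_crankLeSeries (s : ℕ) (hq : ‖q‖ < 1) :
    HasSum (fun n => (crankCount n s : ℂ) * q ^ n)
      (crankLeSeries s q - tripleSeries q + q ^ s * crankLeSeries s q) := by
  have hle := hasSum_crankLeSeries s hq
  refine ((hle.sub (hasSum_card_triplesOfSize hq)).add (hasSum_shift hle s)).congr_fun fun n => ?_
  have hcount : (crankCount n s + #(triplesOfSize n) : ℂ) =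
      crankLeCount n s + if s ≤ n then (crankLeCount (n - s) s : ℂ) else 0 := by
    exact_mod_cast crankCount_add_card_triplesOfSize n s
  linear_combination q ^ n * hcount

lemma add_two_choose_two (l : ℕ) : (l + 2).choose 2 = (l + 1).choose 2 + (l + 1) := by
  rw [Nat.choose_succ_succ, Nat.choose_one_right, add_comm]

lemma le_add_one_choose_two (l : ℕ) : l ≤ (l + 1).choose 2 := by
  cases l with
  | zero => exact Nat.zero_le _
  | succ l => exact (Nat.le_add_left _ _).trans (add_two_choose_two l).ge

lemma norm_alternating_theta_term_le (hq : ‖q‖ < 1) {w : ℂ} (hw : ‖w‖ ≤ 1) (l : ℕ) :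
    ‖(-1) ^ l * w ^ l * q ^ (l + 1).choose 2‖ ≤ ‖q‖ ^ l := by
  simp only [norm_mul, norm_pow, norm_neg, norm_one, one_pow, one_mul]
  exact (mul_le_of_le_one_left (by positivity) (pow_le_one₀ (norm_nonneg _) hw)).trans
    (pow_le_pow_of_le_one (norm_nonneg _) hq.le (le_add_one_choose_two l))

lemma summable_alternating_theta (hq : ‖q‖ < 1) {w : ℂ} (hw : ‖w‖ ≤ 1) :
    Summable fun l : ℕ => (-1) ^ l * w ^ l * q ^ (l + 1).choose 2 :=
  .of_norm_bounded (summable_geometric_of_lt_one (norm_nonneg _) hq)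
    (norm_alternating_theta_term_le hq hw)

lemma crankLeSeries_eq_partial_sum (s : ℕ) (hq : ‖q‖ < 1) (K : ℕ) :
    crankLeSeries s q =
      tripleSeries q * ∑ l ∈ range K, (-1) ^ l * (q ^ s) ^ l * q ^ (l + 1).choose 2 +
        (-1) ^ K * (q ^ s) ^ K * q ^ (K + 1).choose 2 * crankLeSeries (s + K) q := by
  induction K with
  | zero => simp
  | succ K ih =>
    rw [ih, sum_range_succ, crankLeSeries_eq_sub (s + K) hq, add_two_choose_two, ← add_assoc s K 1]
    ring

lemma norm_pow_le_one (s : ℕ) (hq : ‖q‖ < 1) : ‖q ^ s‖ ≤ 1 := by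
  rw [norm_pow]
  exact pow_le_one₀ (norm_nonneg _) hq.le

lemma crankLeSeries_eq (s : ℕ) (hq : ‖q‖ < 1) :
    crankLeSeries s q =
      tripleSeries q * ∑' l : ℕ, (-1) ^ l * (q ^ s) ^ l * q ^ (l + 1).choose 2 := by
  have hw := norm_pow_le_one s hq
  obtain ⟨B, hB⟩ := exists_norm_crankLeSeries_le hq
  have hmain := (summable_alternating_theta hq hw).hasSum.tendsto_sum_nat.const_mul (tripleSeries q)
  have hremainder : Tendsto (fun K => (-1) ^ K * (q ^ s) ^ K * q ^ (K + 1).choose 2 *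
      crankLeSeries (s + K) q) atTop (𝓝 0) := by
    have hgeom : Tendsto (fun K => ‖q‖ ^ K * B) atTop (𝓝 0) := by
      simpa using (tendsto_pow_atTop_nhds_zero_of_lt_one (norm_nonneg q) hq).mul_const B
    refine squeeze_zero_norm (fun K => ?_) hgeom
    rw [norm_mul]
    gcongr
    exacts [norm_alternating_theta_term_le hq hw K, hB _]
  have hconst := (tendsto_const_nhds (f := atTop)).congr (crankLeSeries_eq_partial_sum s hq)
  simpa only [add_zero] using tendsto_nhds_unique hconst (hmain.add hremainder)

/-- The series `∑ (-w)ˡ (q ^ T l - q ^ T (l + 1))`, where `T l = l (l + 1) / 2`, whose product with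
`tripleSeries q` generates the triples of given crank. -/
noncomputable def crankTheta (w q : ℂ) : ℂ :=
  ∑' l : ℕ, (-1) ^ l * w ^ l * (q ^ (l + 1).choose 2 - q ^ (l + 2).choose 2)

theorem hasSum_crankCount (s : ℕ) (hq : ‖q‖ < 1) :
    HasSum (fun n => (crankCount n s : ℂ) * q ^ n)
      (q ^ s * (tripleSeries q * crankTheta (q ^ s) q)) := by
  convert hasSum_crankCount_of_crankLeSeries s hq using 1
  rw [crankLeSeries_eq s hq]
  have hs := summable_alternating_theta hq (norm_pow_le_one s hq)
  have hzero := hs.tsum_eq_zero_add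
  have hsplit : q ^ s * crankTheta (q ^ s) q =
      q ^ s * (∑' l : ℕ, (-1) ^ l * (q ^ s) ^ l * q ^ (l + 1).choose 2) +
        ∑' l : ℕ, (-1) ^ (l + 1) * (q ^ s) ^ (l + 1) * q ^ (l + 2).choose 2 := by
    rw [crankTheta, ← tsum_mul_left, ← tsum_mul_left,
      ← (hs.mul_left _).tsum_add ((summable_nat_add_iff 1).2 hs)]
    exact tsum_congr fun l => by ring
  simp only [zero_add, pow_zero, mul_one, Nat.choose_succ_self] at hzero
  linear_combination tripleSeries q * hsplit - tripleSeries q * hzero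

end CrankSeries

section CoefficientIntegral

lemma integral_exp_int_mul_I {k : ℤ} (hk : k ≠ 0) : ∫ θ in (-π)..π, cexp (k * I * θ) = 0 := by
  have hperiod : cexp (k * I * π) = cexp (k * I * (-π : ℝ)) :=
    Complex.exp_eq_exp_iff_exists_int.2 ⟨k, by push_cast; ring⟩
  rw [integral_exp_mul_complex (mul_ne_zero (Int.cast_ne_zero.2 hk) Complex.I_ne_zero),
    hperiod, sub_self, zero_div]

lemma exp_neg_pow_mul_exp (n m : ℕ) (t θ : ℝ) :
    cexp (-(t + θ * I)) ^ n * cexp (m * (t + θ * I)) =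
      cexp ((m - n : ℤ) * t) * cexp ((m - n : ℤ) * I * θ) := by
  rw [← Complex.exp_nat_mul, ← Complex.exp_add, ← Complex.exp_add]
  push_cast
  ring_nf

lemma integral_exp_neg_pow_mul_exp (n m : ℕ) (t : ℝ) :
    ∫ θ in (-π)..π, cexp (-(t + θ * I)) ^ n * cexp (m * (t + θ * I)) =
      if n = m then (2 * π : ℂ) else 0 := by
  simp only [exp_neg_pow_mul_exp, intervalIntegral.integral_const_mul]
  split_ifs with h
  · subst h
    simp [two_mul]
  · rw [integral_exp_int_mul_I (by omega), mul_zero]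

lemma norm_exp_neg_add_mul_I (t θ : ℝ) : ‖cexp (-(t + θ * I))‖ = Real.exp (-t) := by
  simp [Complex.norm_exp]

lemma norm_exp_neg_add_mul_I_lt_one {t : ℝ} (ht : 0 < t) (θ : ℝ) : ‖cexp (-(t + θ * I))‖ < 1 := by
  rw [norm_exp_neg_add_mul_I]
  exact Real.exp_lt_one_iff.2 (neg_lt_zero.2 ht)

lemma integral_mul_exp_eq_coeff {a : ℕ → ℂ} {F : ℂ → ℂ} {t : ℝ} (ht : 0 < t) (m : ℕ)
    (hF : ∀ q, ‖q‖ < 1 → HasSum (fun n => a n * q ^ n) (F q)) :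
    ∫ θ in (-π)..π, F (cexp (-(t + θ * I))) * cexp (m * (t + θ * I)) = 2 * π * a m := by
  have hlt := norm_exp_neg_add_mul_I_lt_one ht
  let term (n : ℕ) : C(ℝ, ℂ) :=
    ⟨fun θ => a n * (cexp (-(t + θ * I)) ^ n * cexp (m * (t + θ * I))), by fun_prop⟩
  have hbound : Summable fun n => ‖(term n).restrict (⟨Set.uIcc (-π) π, isCompact_uIcc⟩ :
      TopologicalSpace.Compacts ℝ)‖ := by
    have hnorm := (hF _ (hlt 0)).summable.norm.mul_right (Real.exp (m * t))
    refine hnorm.of_nonneg_of_le (fun n => norm_nonneg _) fun n => ?_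
    rw [ContinuousMap.norm_le _ (by positivity)]
    intro θ
    simp [term, Complex.norm_exp, mul_assoc]
  have hseries := intervalIntegral.hasSum_intervalIntegral_of_summable_norm hbound
  have hpoint (θ : ℝ) : ∑' n, term n θ = F (cexp (-(t + θ * I))) * cexp (m * (t + θ * I)) := by
    rw [← (hF _ (hlt θ)).tsum_eq, ← tsum_mul_right]
    exact tsum_congr fun n => (mul_assoc _ _ _).symm
  simp only [hpoint] at hseries
  refine hseries.unique ((hasSum_ite_eq m (2 * π * a m)).congr_fun fun n => ?_)
  change ∫ θ in (-π)..π, a n * (cexp (-(t + θ * I)) ^ n * cexp (m * (t + θ * I))) = _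
  rw [intervalIntegral.integral_const_mul, integral_exp_neg_pow_mul_exp]
  split_ifs with h
  · rw [h, mul_comm]
  · rw [mul_zero]

theorem integral_tripleSeries_mul_crankTheta (μ s : ℕ) {t : ℝ} (ht : 0 < t) :
    ∫ θ in (-π)..π, tripleSeries (cexp (-(t + θ * I))) *
      crankTheta (cexp (-(t + θ * I)) ^ s) (cexp (-(t + θ * I))) * cexp (μ * (t + θ * I)) =
        2 * π * crankCount (μ + s) s := by
  rw [← integral_mul_exp_eq_coeff (a := fun n => (crankCount n s : ℂ)) ht (μ + s)
    fun q hq => hasSum_crankCount s hq]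
  congr 1 with θ
  have hexp : cexp (-(t + θ * I)) ^ s * cexp ((μ + s : ℕ) * (t + θ * I)) =
      cexp (μ * (t + θ * I)) := by
    rw [← Complex.exp_nat_mul, ← Complex.exp_add]
    push_cast
    ring_nf
  rw [← hexp]
  ring

end CoefficientIntegral

section ModularTransformation

lemma csqrt_I_mul {x : ℂ} (hx : 0 < x.re) :
    Complex.sqrt (I * x) = Complex.sqrt I * Complex.sqrt x := by
  have hx₀ : x ≠ 0 := Complex.ne_zero_of_re_pos hx
  have harg := abs_lt.1 (Complex.abs_arg_lt_pi_div_two_iff.2 (Or.inl hx))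
  have hlog : Complex.log (I * x) = Complex.log I + Complex.log x := by
    refine Complex.log_mul Complex.I_ne_zero hx₀ ?_
    rw [Complex.arg_I]
    constructor <;> linarith
  simp only [Complex.sqrt, Complex.cpow_def_of_ne_zero (mul_ne_zero Complex.I_ne_zero hx₀),
    Complex.cpow_def_of_ne_zero Complex.I_ne_zero, Complex.cpow_def_of_ne_zero hx₀, hlog,
    add_mul, Complex.exp_add]

lemma csqrt_mul_self (x : ℂ) : Complex.sqrt x * Complex.sqrt x = x := by
  simp [← sq, Complex.sqrt]

lemma eta_eq_exp_mul_eulerPhi (z : ℂ) :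
    ModularForm.eta z = cexp (2 * π * I * z / 24) * eulerPhi (cexp (2 * π * I * z)) := by
  simp [ModularForm.eta, eulerPhi, ModularForm.eta_q_eq_pow, Function.Periodic.qParam]

lemma eulerPhi_exp_neg_transform {τ : ℂ} (hτ : 0 < τ.re) :
    eulerPhi (cexp (-(4 * π ^ 2 / τ))) * cexp (-(π ^ 2 / (6 * τ))) =
      Complex.sqrt (τ / (2 * π)) * cexp (-(τ / 24)) * eulerPhi (cexp (-τ)) := by
  have hπ : (π : ℂ) ≠ 0 := Complex.ofReal_ne_zero.2 Real.pi_ne_zero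
  have hτ₀ : τ ≠ 0 := Complex.ne_zero_of_re_pos hτ
  have hre : 0 < (τ / (2 * π)).re := by
    rw [← Complex.ofReal_ofNat, ← Complex.ofReal_mul, Complex.div_ofReal_re]
    positivity
  have hmem : I * (τ / (2 * π)) ∈ UpperHalfPlane.upperHalfPlaneSet := by
    change 0 < (I * (τ / (2 * π))).im
    rwa [Complex.I_mul_im]
  have heta := ModularForm.eta_comp_eq_csqrt_I_inv hmem
  simp only [Function.comp_apply, Pi.smul_apply, Pi.mul_apply, smul_eq_mul] at heta
  have hI : Complex.sqrt I ≠ 0 := fun h =>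
    Complex.I_ne_zero (by rw [← csqrt_mul_self I, h, mul_zero])
  have harg : 2 * π * I * (I * (τ / (2 * π))) = -τ := by
    field_simp
    rw [Complex.I_sq]
  have harg' : 2 * π * I * (-1 / (I * (τ / (2 * π)))) = -(4 * π ^ 2 / τ) := by
    field_simp
    ring
  have hprefactor : -(4 * (π : ℂ) ^ 2 / τ) / 24 = -(π ^ 2 / (6 * τ)) := by
    field_simp
    ring
  rw [eta_eq_exp_mul_eulerPhi, eta_eq_exp_mul_eulerPhi, csqrt_I_mul hre, harg, harg', hprefactor,
    neg_div, mul_assoc, inv_mul_cancel_left₀ hI, ← mul_assoc] at heta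
  rw [← heta, mul_comm]

lemma tendsto_eulerPhi_nhds_zero : Tendsto eulerPhi (𝓝 0) (𝓝 1) := by
  have hlim := tendsto_tprod_one_add_of_dominated_convergence (𝓕 := 𝓝 0) (g := 0)
    (f := fun (q : ℂ) (n : ℕ) => -q ^ (n + 1)) (bound := fun n => (1 / 2 : ℝ) ^ (n + 1))
    ((summable_nat_add_iff 1).2 summable_geometric_two)
    (fun n => by simpa using ((continuous_pow (M := ℂ) (n + 1)).tendsto 0).neg) ?_
  · simp only [← sub_eq_add_neg, Pi.zero_apply, add_zero, tprod_one] at hlim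
    exact hlim
  · filter_upwards [Metric.ball_mem_nhds (0 : ℂ) one_half_pos] with q hq n
    rw [norm_neg, norm_pow]
    exact pow_le_pow_left₀ (norm_nonneg _) (mem_ball_zero_iff.1 hq).le _

/-- The sector `|arg τ| ≤ π / 4`, without its vertex. -/
def majorCone : Set ℂ := {τ | 0 < τ.re ∧ |τ.im| ≤ τ.re}

lemma normSq_le_of_mem_majorCone {τ : ℂ} (h : τ ∈ majorCone) :
    Complex.normSq τ ≤ 2 * τ.re ^ 2 := by
  rw [Complex.normSq_apply]
  linarith [sq_le_sq' (abs_le.1 h.2).1 (abs_le.1 h.2).2]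

lemma four_pi_sq_div_re (τ : ℂ) :
    (4 * (π : ℂ) ^ 2 / τ).re = 4 * π ^ 2 * (τ.re / Complex.normSq τ) := by
  rw [← Complex.inv_re, ← Complex.re_ofReal_mul]
  push_cast
  rw [div_eq_mul_inv]

lemma norm_exp_neg_four_pi_sq_div_le {τ : ℂ} (hτ : τ ∈ majorCone) :
    ‖cexp (-(4 * π ^ 2 / τ))‖ ≤ Real.exp (-τ.re⁻¹) := by
  have hnormSq := normSq_le_of_mem_majorCone hτ
  have hre := hτ.1
  have hpos : 0 < Complex.normSq τ := Complex.normSq_pos.2 (Complex.ne_zero_of_re_pos hre)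
  rw [Complex.norm_exp, Real.exp_le_exp, Complex.neg_re, neg_le_neg_iff, four_pi_sq_div_re,
    ← mul_div_assoc, inv_eq_one_div, div_le_div_iff₀ hre hpos]
  nlinarith [sq_nonneg τ.re, Real.pi_gt_three, mul_pos hre hre,
    mul_pos Real.pi_pos (mul_pos hre hre)]

/-- The factor by which `1 / eulerPhi` differs from its leading behaviour at `q = exp (-τ)`. -/
noncomputable def eulerPhiInvError (τ : ℂ) : ℂ :=
  cexp (-(τ / 24)) * (eulerPhi (cexp (-(4 * π ^ 2 / τ))))⁻¹

lemma tendsto_eulerPhiInvError : Tendsto eulerPhiInvError (𝓝[majorCone] 0) (𝓝 1) := by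
  have hfactor : Tendsto (fun τ : ℂ => cexp (-(τ / 24))) (𝓝[majorCone] 0) (𝓝 1) := by
    have hcont : Continuous fun τ : ℂ => cexp (-(τ / 24)) := by fun_prop
    simpa using (hcont.tendsto 0).mono_left nhdsWithin_le_nhds
  have hre : Tendsto Complex.re (𝓝[majorCone] 0) (𝓝[>] 0) :=
    tendsto_nhdsWithin_iff.2 ⟨(Complex.continuous_re.tendsto 0).mono_left nhdsWithin_le_nhds,
      eventually_mem_nhdsWithin.mono fun τ hτ => hτ.1⟩
  have hnome : Tendsto (fun τ : ℂ => cexp (-(4 * π ^ 2 / τ))) (𝓝[majorCone] 0) (𝓝 0) :=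
    squeeze_zero_norm' (eventually_mem_nhdsWithin.mono fun τ => norm_exp_neg_four_pi_sq_div_le)
      (Real.tendsto_exp_neg_atTop_nhds_zero.comp (tendsto_inv_nhdsGT_zero.comp hre))
  have hlim := hfactor.mul ((tendsto_eulerPhi_nhds_zero.comp hnome).inv₀ one_ne_zero)
  rw [inv_one, mul_one] at hlim
  exact hlim

lemma norm_exp_neg_lt_one {z : ℂ} (hz : 0 < z.re) : ‖cexp (-z)‖ < 1 := by
  rw [Complex.norm_exp, Complex.neg_re]
  exact Real.exp_lt_one_iff.2 (neg_lt_zero.2 hz)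

lemma eulerPhi_inv_exp_neg {τ : ℂ} (hτ : 0 < τ.re) :
    (eulerPhi (cexp (-τ)))⁻¹ =
      Complex.sqrt (τ / (2 * π)) * cexp (π ^ 2 / (6 * τ)) * eulerPhiInvError τ := by
  have htransform := eulerPhi_exp_neg_transform hτ
  have hτ' : 0 < (4 * (π : ℂ) ^ 2 / τ).re := by
    have := Complex.normSq_pos.2 (Complex.ne_zero_of_re_pos hτ)
    rw [four_pi_sq_div_re]
    positivity
  have hne := eulerPhi_ne_zero (norm_exp_neg_lt_one hτ)
  have hne' := eulerPhi_ne_zero (norm_exp_neg_lt_one hτ')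
  have hexp := Complex.exp_ne_zero (π ^ 2 / (6 * τ))
  rw [Complex.exp_neg (π ^ 2 / (6 * τ))] at htransform
  rw [eulerPhiInvError]
  field_simp at htransform ⊢
  linear_combination htransform

/-- The factor by which `tripleSeries` differs from its leading behaviour at `q = exp (-τ)`. -/
noncomputable def tripleSeriesError (τ : ℂ) : ℂ := eulerPhiInvError τ ^ 2 * eulerPhiInvError (2 * τ)

lemma tendsto_tripleSeriesError : Tendsto tripleSeriesError (𝓝[majorCone] 0) (𝓝 1) := by
  have hdouble : Tendsto (fun τ : ℂ => 2 * τ) (𝓝[majorCone] 0) (𝓝[majorCone] 0) := by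
    refine tendsto_nhdsWithin_iff.2 ⟨?_, eventually_mem_nhdsWithin.mono fun τ hτ => ?_⟩
    · simpa using ((continuous_const_mul (2 : ℂ)).tendsto 0).mono_left nhdsWithin_le_nhds
    · simpa [majorCone, abs_mul] using hτ
  have hlim := (tendsto_eulerPhiInvError.pow 2).mul (tendsto_eulerPhiInvError.comp hdouble)
  rw [one_pow, mul_one] at hlim
  exact hlim

/-- The constant governing the growth `log (tripleSeries (exp (-t))) ~ growthConst / t` as
`t → 0⁺`. -/
noncomputable def growthConst : ℝ := 5 * π ^ 2 / 12

lemma growthConst_pos : 0 < growthConst := by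
  unfold growthConst
  positivity

theorem tripleSeries_exp_neg {τ : ℂ} (hτ : 0 < τ.re) :
    tripleSeries (cexp (-τ)) =
      τ / (2 * π) * Complex.sqrt (τ / π) * cexp (growthConst / τ) *
        tripleSeriesError τ := by
  have hτ₀ : τ ≠ 0 := Complex.ne_zero_of_re_pos hτ
  have hdouble : 0 < (2 * τ).re := by simpa using hτ
  have hsq : cexp (-τ) ^ 2 = cexp (-(2 * τ)) := by
    rw [← Complex.exp_nat_mul]
    push_cast
    ring_nf
  have hexp : cexp (growthConst / τ) =
      cexp (π ^ 2 / (6 * τ)) * (cexp (π ^ 2 / (6 * τ)) * cexp (π ^ 2 / (6 * (2 * τ)))) := by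
    rw [← Complex.exp_add, ← Complex.exp_add, growthConst]
    congr 1
    push_cast
    field_simp
    ring
  rw [tripleSeries, hsq, eulerPhi_inv_exp_neg hτ, eulerPhi_inv_exp_neg hdouble, hexp,
    tripleSeriesError, mul_div_mul_left _ _ (two_ne_zero' ℂ)]
  nth_rewrite 3 [← csqrt_mul_self (τ / (2 * π))]
  ring

end ModularTransformation

section MinorArc

-- The `n = 1` term of `∑ (‖z‖ ^ n - (z ^ n).re) / n`, a sum of nonnegative terms.
lemma norm_sub_re_le_log_norm_one_sub {z : ℂ} (hz : ‖z‖ < 1) :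
    ‖z‖ - z.re ≤ Real.log ‖1 - z‖ - Real.log (1 - ‖z‖) := by
  have hlog := Complex.hasSum_re (Complex.hasSum_taylorSeries_neg_log hz)
  have hlog_norm := Complex.hasSum_re
    (Complex.hasSum_taylorSeries_neg_log (z := (‖z‖ : ℂ)) (by simpa using hz))
  have hre_div (w : ℂ) (n : ℕ) : (w ^ n / n).re = (w ^ n).re / n := by
    rw [← Complex.ofReal_natCast, Complex.div_ofReal_re]
  have hfirst := sum_le_hasSum {1} (fun n _ => ?_) (hlog_norm.sub hlog)
  · have hone_sub : ‖(1 : ℂ) - (‖z‖ : ℂ)‖ = 1 - ‖z‖ := by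
      rw [← Complex.ofReal_one, ← Complex.ofReal_sub, Complex.norm_of_nonneg (sub_pos.2 hz).le]
    rw [sum_singleton, Complex.neg_re, Complex.neg_re, Complex.log_re, Complex.log_re,
      hone_sub] at hfirst
    simp only [pow_one, Nat.cast_one, div_one, Complex.ofReal_re] at hfirst
    linarith
  · have hre_le : (z ^ n).re ≤ ‖z‖ ^ n := norm_pow z n ▸ Complex.re_le_norm _
    rw [sub_nonneg, hre_div, hre_div, ← Complex.ofReal_pow, Complex.ofReal_re]
    gcongr

lemma norm_inv_one_sub_le {z : ℂ} (hz : ‖z‖ < 1) :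
    ‖(1 - z)⁻¹‖ ≤ (1 - ‖z‖)⁻¹ * Real.exp (z.re - ‖z‖) := by
  have hpos : 0 < ‖1 - z‖ := norm_pos_iff.2 (sub_ne_zero.2 (by rintro rfl; simp at hz))
  have hpos' : 0 < 1 - ‖z‖ := sub_pos.2 hz
  rw [norm_inv, ← Real.exp_log (inv_pos.2 hpos), ← Real.exp_log (inv_pos.2 hpos'), ← Real.exp_add,
    Real.exp_le_exp, Real.log_inv, Real.log_inv]
  linarith [norm_sub_re_le_log_norm_one_sub hz]

lemma norm_eulerPhi_inv_le_mul_exp {q : ℂ} (hq : ‖q‖ < 1) :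
    ‖(eulerPhi q)⁻¹‖ ≤
      ‖(eulerPhi ‖q‖)⁻¹‖ * Real.exp ((q / (1 - q)).re - ‖q‖ / (1 - ‖q‖)) := by
  have hgeom : HasSum (fun i : ℕ => (q ^ (i + 1)).re - ‖q‖ ^ (i + 1))
      ((q / (1 - q)).re - ‖q‖ / (1 - ‖q‖)) := by
    have hsum := (Complex.hasSum_re ((hasSum_geometric_of_norm_lt_one hq).mul_left q)).sub
      ((hasSum_geometric_of_lt_one (norm_nonneg q) hq).mul_left ‖q‖)
    simpa only [← pow_succ', ← div_eq_mul_inv] using hsum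
  have hexp := (Real.continuous_exp.tendsto _).comp hgeom.tendsto_sum_nat
  have hnorm := (tendsto_prod_inv_eulerPhi (q := ‖q‖) (by simpa using hq)).norm
  refine le_of_tendsto_of_tendsto' (tendsto_prod_inv_eulerPhi hq).norm (hnorm.mul hexp) fun K => ?_
  rw [Function.comp_apply, Real.exp_sum, ← Fin.prod_univ_eq_prod_range, norm_prod, norm_prod,
    ← prod_mul_distrib]
  refine prod_le_prod (fun _ _ => norm_nonneg _) fun i _ => ?_
  have hlt := norm_pow_succ_lt_one hq i
  have hfactor : ‖(1 - (‖q‖ : ℂ) ^ (i + 1 : ℕ))⁻¹‖ = (1 - ‖q ^ (i + 1 : ℕ)‖)⁻¹ := by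
    rw [norm_inv, norm_pow, ← Complex.ofReal_pow, ← Complex.ofReal_one, ← Complex.ofReal_sub,
      Complex.norm_of_nonneg (sub_nonneg.2 (norm_pow q _ ▸ hlt.le))]
  rw [hfactor, ← norm_pow]
  exact norm_inv_one_sub_le hlt

lemma norm_eulerPhi_inv_le {q : ℂ} (hq : ‖q‖ < 1) : ‖(eulerPhi q)⁻¹‖ ≤ ‖(eulerPhi ‖q‖)⁻¹‖ := by
  have hre : (q / (1 - q)).re ≤ ‖q‖ / (1 - ‖q‖) := by
    have hpos : 0 < 1 - ‖q‖ := sub_pos.2 hq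
    have hle : 1 - ‖q‖ ≤ ‖1 - q‖ := by simpa using norm_sub_norm_le 1 q
    calc (q / (1 - q)).re ≤ ‖q / (1 - q)‖ := Complex.re_le_norm _
      _ = ‖q‖ / ‖1 - q‖ := norm_div _ _
      _ ≤ ‖q‖ / (1 - ‖q‖) := div_le_div_of_nonneg_left (norm_nonneg _) hpos hle
  exact (norm_eulerPhi_inv_le_mul_exp hq).trans
    (mul_le_of_le_one_right (norm_nonneg _) (Real.exp_le_one_iff.2 (sub_nonpos.2 hre)))

variable {t θ : ℝ}

lemma normSq_one_sub_exp_neg_add_mul_I (t θ : ℝ) :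
    ‖1 - cexp (-(t + θ * I))‖ ^ 2 =
      (1 - Real.exp (-t)) ^ 2 + 2 * Real.exp (-t) * (1 - Real.cos θ) := by
  rw [← Complex.normSq_eq_norm_sq, Complex.normSq_apply]
  simp only [Complex.sub_re, Complex.sub_im, Complex.exp_re, Complex.exp_im, Complex.one_re,
    Complex.one_im, Complex.neg_re, Complex.neg_im, Complex.add_re, Complex.add_im,
    Complex.ofReal_re, Complex.ofReal_im, Complex.re_ofReal_mul, Complex.im_ofReal_mul,
    Complex.I_re, Complex.I_im, mul_zero, mul_one, add_zero, zero_add, Real.cos_neg, Real.sin_neg]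
  linear_combination Real.exp (-t) ^ 2 * Real.sin_sq_add_cos_sq θ

lemma norm_one_sub_exp_ge_of_minorArc (ht : 0 < t) (ht' : t ≤ 1 / 2) (hθ : t ≤ |θ|)
    (hθ' : |θ| ≤ π) : 12 / 11 * (1 - Real.exp (-t)) ≤ ‖1 - cexp (-(t + θ * I))‖ := by
  have hr_lt : Real.exp (-t) < 1 := Real.exp_lt_one_iff.2 (neg_lt_zero.2 ht)
  have hr_ge : 1 - t ≤ Real.exp (-t) := Real.one_sub_le_exp_neg t
  refine (sq_le_sq₀ (by linarith) (norm_nonneg _)).1 ?_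
  rw [normSq_one_sub_exp_neg_add_mul_I]
  have hpi : π ^ 2 ≤ 10 := by nlinarith [Real.pi_lt_d2, Real.pi_pos]
  have hcos : 1 / 5 * θ ^ 2 ≤ 1 - Real.cos θ := by
    have hcoeff : 1 / 5 * θ ^ 2 ≤ 2 / π ^ 2 * θ ^ 2 := by
      refine mul_le_mul_of_nonneg_right ?_ (sq_nonneg _)
      rw [div_le_div_iff₀ (by norm_num) (by positivity)]
      linarith
    linarith [Real.cos_le_one_sub_mul_cos_sq hθ']
  have hsq : (1 - Real.exp (-t)) ^ 2 ≤ θ ^ 2 := by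
    rw [← sq_abs θ]
    exact pow_le_pow_left₀ (by linarith) (by linarith) 2
  nlinarith [sq_nonneg θ]

lemma norm_eulerPhi_inv_le_of_minorArc (ht : 0 < t) (ht' : t ≤ 1 / 2) (hθ : t ≤ |θ|)
    (hθ' : |θ| ≤ π) :
    ‖(eulerPhi (cexp (-(t + θ * I))))⁻¹‖ ≤
      ‖(eulerPhi (cexp (-t)))⁻¹‖ * Real.exp (-(1 / (24 * t))) := by
  have hbound := norm_eulerPhi_inv_le_mul_exp (norm_exp_neg_add_mul_I_lt_one ht θ)
  have hone_sub := norm_one_sub_exp_ge_of_minorArc ht ht' hθ hθ'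
  have hnorm := norm_exp_neg_add_mul_I t θ
  set q := cexp (-(t + θ * I))
  set r := Real.exp (-t) with hr
  have hr_lt : r < 1 := Real.exp_lt_one_iff.2 (neg_lt_zero.2 ht)
  have hr_ge : 1 - t ≤ r := Real.one_sub_le_exp_neg t
  have hre : (q / (1 - q)).re ≤ 11 / 12 * (r / (1 - r)) := by
    have hpos : 0 < 12 / 11 * (1 - r) := by linarith
    calc (q / (1 - q)).re ≤ ‖q / (1 - q)‖ := Complex.re_le_norm _
      _ = r / ‖1 - q‖ := by rw [norm_div, hnorm]
      _ ≤ r / (12 / 11 * (1 - r)) :=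
        div_le_div_of_nonneg_left (Real.exp_pos _).le hpos hone_sub
      _ = 11 / 12 * (r / (1 - r)) := by field_simp
  have hgeom : 1 / (2 * t) ≤ r / (1 - r) := by
    rw [div_le_div_iff₀ (by linarith) (by linarith)]
    nlinarith
  have hexp : cexp (-t) = (r : ℂ) := by rw [hr, Complex.ofReal_exp, Complex.ofReal_neg]
  rw [hnorm] at hbound
  rw [hexp]
  refine hbound.trans ?_
  gcongr
  have hsplit : 1 / (24 * t) = 1 / 12 * (1 / (2 * t)) := by ring
  linarith

theorem norm_tripleSeries_le_of_minorArc (ht : 0 < t) (ht' : t ≤ 1 / 2) (hθ : t ≤ |θ|)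
    (hθ' : |θ| ≤ π) :
    ‖tripleSeries (cexp (-(t + θ * I)))‖ ≤
      ‖tripleSeries (cexp (-t))‖ * Real.exp (-(1 / (12 * t))) := by
  have hminor := norm_eulerPhi_inv_le_of_minorArc ht ht' hθ hθ'
  have hsq : ‖(eulerPhi (cexp (-(t + θ * I)) ^ 2))⁻¹‖ ≤ ‖(eulerPhi (cexp (-t) ^ 2))⁻¹‖ := by
    have hlt := norm_pow_succ_lt_one (norm_exp_neg_add_mul_I_lt_one ht θ) 1
    have hbound := norm_eulerPhi_inv_le hlt
    rw [norm_pow, norm_exp_neg_add_mul_I] at hbound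
    push_cast at hbound
    exact hbound
  have hexp : Real.exp (-(1 / (12 * t))) =
      Real.exp (-(1 / (24 * t))) * Real.exp (-(1 / (24 * t))) := by
    rw [← Real.exp_add]
    ring_nf
  simp only [tripleSeries, norm_mul]
  calc _ ≤ ‖(eulerPhi (cexp (-t)))⁻¹‖ * Real.exp (-(1 / (24 * t))) *
        (‖(eulerPhi (cexp (-t)))⁻¹‖ * Real.exp (-(1 / (24 * t))) *
          ‖(eulerPhi (cexp (-t) ^ 2))⁻¹‖) := by gcongr
    _ = _ := by
      rw [hexp]
      ring

end MinorArc

section EulerTransform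

open scoped fwdDiff

variable {f : ℕ → ℂ} {w : ℂ}

lemma summable_norm_fwdDiff (hf : Summable fun l => ‖f l‖) :
    Summable fun l => ‖Δ_[1] f l‖ :=
  .of_nonneg_of_le (fun _ => norm_nonneg _) (fun _ => norm_sub_le _ _)
    (((summable_nat_add_iff 1).2 hf).add hf)

lemma summable_neg_pow_mul (hf : Summable fun l => ‖f l‖) (hw : ‖w‖ ≤ 1) :
    Summable fun l => (-w) ^ l * f l := by
  refine .of_norm_bounded hf fun l => ?_
  rw [norm_mul, norm_pow, norm_neg]
  exact mul_le_of_le_one_left (norm_nonneg _) (pow_le_one₀ (norm_nonneg _) hw)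

lemma one_add_mul_tsum_neg_pow_mul (hf : Summable fun l => ‖f l‖) (hw : ‖w‖ ≤ 1) :
    (1 + w) * ∑' l, (-w) ^ l * f l = f 0 - w * ∑' l, (-w) ^ l * Δ_[1] f l := by
  have hsum := summable_neg_pow_mul hf hw
  have hshift : Summable fun l => (-w) ^ l * f (l + 1) :=
    summable_neg_pow_mul ((summable_nat_add_iff 1).2 hf) hw
  have hfirst : ∑' l, (-w) ^ l * f l = f 0 - w * ∑' l, (-w) ^ l * f (l + 1) := by
    rw [hsum.tsum_eq_zero_add, pow_zero, one_mul, ← tsum_mul_left, sub_eq_add_neg, ← tsum_neg]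
    exact congrArg _ (tsum_congr fun l => by ring)
  have hdiff : ∑' l, (-w) ^ l * Δ_[1] f l =
      ∑' l, (-w) ^ l * f (l + 1) - ∑' l, (-w) ^ l * f l := by
    rw [← hshift.tsum_sub hsum]
    exact tsum_congr fun l => mul_sub _ _ _
  rw [hdiff]
  linear_combination hfirst

lemma one_add_pow_mul_tsum_neg_pow_mul (hf : Summable fun l => ‖f l‖) (hw : ‖w‖ ≤ 1) (n : ℕ) :
    (1 + w) ^ n * ∑' l, (-w) ^ l * f l =
      ∑ j ∈ range n, (-w) ^ j * (1 + w) ^ (n - (j + 1)) * Δ_[1] ^[j] f 0 +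
        (-w) ^ n * ∑' l, (-w) ^ l * Δ_[1] ^[n] f l := by
  induction n generalizing f with
  | zero => simp
  | succ n ih =>
    rw [pow_succ, mul_assoc, one_add_mul_tsum_neg_pow_mul hf hw, mul_sub, mul_left_comm,
      ih (summable_norm_fwdDiff hf), sum_range_succ', mul_add, mul_sum]
    simp only [Function.iterate_succ_apply, Function.iterate_zero_apply, pow_succ (-w), pow_zero,
      Nat.add_sub_add_right, Nat.sub_zero, mul_assoc, neg_mul, mul_neg, sum_neg_distrib,
      mul_left_comm w]
    ring

end EulerTransform

section CrankThetaBounds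

open scoped fwdDiff

variable {q : ℂ}

lemma norm_one_sub_pow_le (hq : ‖q‖ ≤ 1) (n : ℕ) : ‖1 - q ^ n‖ ≤ n * ‖1 - q‖ := by
  induction n with
  | zero => simp
  | succ n ih =>
    calc ‖1 - q ^ (n + 1)‖ = ‖(1 - q) + q * (1 - q ^ n)‖ := by ring_nf
      _ ≤ ‖1 - q‖ + ‖q‖ * ‖1 - q ^ n‖ := norm_mul q _ ▸ norm_add_le _ _
      _ ≤ ‖1 - q‖ + 1 * (n * ‖1 - q‖) := by gcongr
      _ = (n + 1 : ℕ) * ‖1 - q‖ := by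
        push_cast
        ring

lemma norm_natCast_mul_one_sub_sub_le (hq : ‖q‖ ≤ 1) (n : ℕ) :
    ‖n * (1 - q) - (1 - q ^ n)‖ ≤ n.choose 2 * ‖1 - q‖ ^ 2 := by
  induction n with
  | zero => simp
  | succ n ih =>
    calc ‖(n + 1 : ℕ) * (1 - q) - (1 - q ^ (n + 1))‖
        = ‖(n * (1 - q) - (1 - q ^ n)) + (1 - q) * (1 - q ^ n)‖ := by
          push_cast
          ring_nf
      _ ≤ ‖n * (1 - q) - (1 - q ^ n)‖ + ‖1 - q‖ * ‖1 - q ^ n‖ :=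
          norm_mul (1 - q) _ ▸ norm_add_le _ _
      _ ≤ n.choose 2 * ‖1 - q‖ ^ 2 + ‖1 - q‖ * (n * ‖1 - q‖) := by
          gcongr
          exact norm_one_sub_pow_le hq n
      _ = (n + 1).choose 2 * ‖1 - q‖ ^ 2 := by
          rw [Nat.choose_succ_succ', Nat.choose_one_right]
          push_cast
          ring

lemma norm_quartic_le {y : ℂ} (hq : ‖q‖ ≤ 1) (hy : ‖y‖ ≤ 1) :
    ‖1 - 4 * y * q + 6 * y ^ 2 * q ^ 3 - 4 * y ^ 3 * q ^ 6 + y ^ 4 * q ^ 10‖ ≤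
      ‖1 - y‖ ^ 4 + 14 * ‖1 - q‖ * ‖1 - y‖ ^ 2 + 123 * ‖1 - q‖ ^ 2 := by
  have hpow (n : ℕ) : ‖y‖ ^ n ≤ 1 := pow_le_one₀ (norm_nonneg _) hy
  have h3 := norm_natCast_mul_one_sub_sub_le hq 3
  have h6 := norm_natCast_mul_one_sub_sub_le hq 6
  have h10 := norm_natCast_mul_one_sub_sub_le hq 10
  set r : ℕ → ℂ := fun n => n * (1 - q) - (1 - q ^ n) with hr
  have hexpand : 1 - 4 * y * q + 6 * y ^ 2 * q ^ 3 - 4 * y ^ 3 * q ^ 6 + y ^ 4 * q ^ 10 =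
      (1 - y) ^ 4 + (1 - q) * (1 - y) ^ 2 * (4 * y - 10 * y ^ 2) +
        (6 * y ^ 2 * r 3 - 4 * y ^ 3 * r 6 + y ^ 4 * r 10) := by
    simp only [hr]
    push_cast
    ring
  have hlinear : ‖4 * y - 10 * y ^ 2‖ ≤ 14 := by
    refine (norm_sub_le _ _).trans ?_
    simp only [norm_mul, norm_pow, Complex.norm_ofNat]
    linarith [hpow 2]
  have hrest : ‖6 * y ^ 2 * r 3 - 4 * y ^ 3 * r 6 + y ^ 4 * r 10‖ ≤ 123 * ‖1 - q‖ ^ 2 := by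
    refine (norm_add_le_of_le (norm_sub_le _ _) le_rfl).trans ?_
    simp only [norm_mul, norm_pow, Complex.norm_ofNat]
    calc _ ≤ 6 * 1 * ((3 : ℕ).choose 2 * ‖1 - q‖ ^ 2) + 4 * 1 * ((6 : ℕ).choose 2 * ‖1 - q‖ ^ 2) +
          1 * ((10 : ℕ).choose 2 * ‖1 - q‖ ^ 2) := by gcongr <;> exact hpow _
      _ = 123 * ‖1 - q‖ ^ 2 := by
        norm_num [Nat.choose]
        ring
  rw [hexpand]
  refine norm_add₃_le.trans (add_le_add_three (norm_pow _ _).le ?_ hrest)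
  rw [norm_mul, norm_mul, norm_pow]
  calc ‖1 - q‖ * ‖1 - y‖ ^ 2 * ‖4 * y - 10 * y ^ 2‖ ≤ ‖1 - q‖ * ‖1 - y‖ ^ 2 * 14 := by gcongr
    _ = 14 * ‖1 - q‖ * ‖1 - y‖ ^ 2 := by ring

lemma add_add_one_choose_two (k j : ℕ) :
    (k + j + 1).choose 2 = (k + 1).choose 2 + k * j + (j + 1).choose 2 := by
  induction j with
  | zero => simp
  | succ j ih =>
    rw [← add_assoc, add_two_choose_two, ih, add_two_choose_two]
    ring

/-- The consecutive differences of the powers of `q` with triangular exponents, the coefficients of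
`crankTheta`. -/
def thetaDiff (q : ℂ) (l : ℕ) : ℂ := q ^ (l + 1).choose 2 - q ^ (l + 2).choose 2

lemma fwdDiff_three_thetaDiff (q : ℂ) (k : ℕ) :
    Δ_[1] ^[3] (thetaDiff q) k = -(q ^ (k + 1).choose 2 * (1 - 4 * q ^ k * q +
      6 * (q ^ k) ^ 2 * q ^ 3 - 4 * (q ^ k) ^ 3 * q ^ 6 + (q ^ k) ^ 4 * q ^ 10)) := by
  have hpow (j : ℕ) : q ^ (k + j + 1).choose 2 =
      q ^ (k + 1).choose 2 * (q ^ k) ^ j * q ^ (j + 1).choose 2 := by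
    rw [add_add_one_choose_two, pow_add, pow_add, pow_mul]
  simp only [Function.iterate_succ_apply, Function.iterate_zero_apply, fwdDiff, thetaDiff,
    add_assoc, Nat.reduceAdd]
  rw [hpow 1, hpow 2, hpow 3, hpow 4]
  norm_num [Nat.choose]
  ring

lemma exp_neg_half_mul_one_add_sq_le {x : ℝ} (hx : 0 ≤ x) :
    Real.exp (-(x / 2)) * (1 + x ^ 2) ≤ 48 / (1 + x) := by
  rw [Real.exp_neg, le_div_iff₀ (by positivity), mul_assoc, inv_mul_le_iff₀ (Real.exp_pos _)]
  have htaylor := Real.sum_le_exp_of_nonneg (x := x / 2) (by positivity) 4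
  norm_num [sum_range_succ, Nat.factorial] at htaylor
  nlinarith [sq_nonneg x, pow_nonneg hx 3]

lemma norm_pow_add_one_choose_two_le {t : ℝ} (ht : 0 < t) (hq : ‖q‖ = Real.exp (-t)) (k : ℕ) :
    ‖q ^ (k + 1).choose 2‖ ≤ Real.exp (-(t * k ^ 2 / 2)) := by
  have hchoose : ((k + 1).choose 2 : ℝ) = (k + 1) * k / 2 := by
    rw [Nat.cast_choose_two]
    push_cast
    ring
  rw [norm_pow, hq, ← Real.exp_nat_mul, Real.exp_le_exp, hchoose]
  have : 0 ≤ t * k := by positivity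
  linarith

lemma norm_fwdDiff_three_thetaDiff_le {t : ℝ} (ht : 0 < t) (hq : ‖q‖ = Real.exp (-t))
    (hsub : ‖1 - q‖ ≤ 4 * t) (k : ℕ) :
    ‖Δ_[1] ^[3] (thetaDiff q) k‖ ≤ 192000 * t * (t / (1 + t * k ^ 2)) := by
  have hq_le : ‖q‖ ≤ 1 := hq ▸ Real.exp_le_one_iff.2 (neg_nonpos.2 ht.le)
  have hpow := norm_pow_add_one_choose_two_le ht hq k
  have hquartic := norm_quartic_le hq_le (norm_pow q k ▸ pow_le_one₀ (norm_nonneg _) hq_le)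
  have hsub_pow : ‖1 - q ^ k‖ ≤ k * (4 * t) :=
    (norm_one_sub_pow_le hq_le k).trans (by gcongr)
  set x := t * (k : ℝ) ^ 2 with hx
  have hx_nonneg : 0 ≤ x := by positivity
  replace hquartic := calc
    _ ≤ _ := hquartic
    _ ≤ (k * (4 * t)) ^ 4 + 14 * (4 * t) * (k * (4 * t)) ^ 2 + 123 * (4 * t) ^ 2 := by gcongr
    _ = t ^ 2 * (256 * x ^ 2 + 896 * x + 1968) := by
      rw [hx]
      ring
    _ ≤ t ^ 2 * (4000 * (1 + x ^ 2)) := by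
      gcongr
      nlinarith [sq_nonneg (x - 1)]
  rw [fwdDiff_three_thetaDiff, norm_neg, norm_mul]
  calc _ ≤ Real.exp (-(x / 2)) * (t ^ 2 * (4000 * (1 + x ^ 2))) := by gcongr
    _ = 4000 * t ^ 2 * (Real.exp (-(x / 2)) * (1 + x ^ 2)) := by ring
    _ ≤ 4000 * t ^ 2 * (48 / (1 + x)) := by
      gcongr
      exact exp_neg_half_mul_one_add_sq_le hx_nonneg
    _ = 192000 * t * (t / (1 + x)) := by ring

lemma norm_thetaDiff_le (hq : ‖q‖ ≤ 1) (l : ℕ) : ‖thetaDiff q l‖ ≤ 2 * ‖q‖ ^ l := by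
  have hpow (m : ℕ) (hm : l ≤ m) : ‖q ^ (m + 1).choose 2‖ ≤ ‖q‖ ^ l :=
    (norm_pow q _).trans_le
      (pow_le_pow_of_le_one (norm_nonneg _) hq (hm.trans (le_add_one_choose_two m)))
  rw [two_mul]
  exact norm_sub_le_of_le (hpow l le_rfl) (hpow (l + 1) (Nat.le_succ l))

lemma summable_norm_thetaDiff (hq : ‖q‖ < 1) : Summable fun l => ‖thetaDiff q l‖ :=
  .of_nonneg_of_le (fun _ => norm_nonneg _) (norm_thetaDiff_le hq.le)
    ((summable_geometric_of_lt_one (norm_nonneg _) hq).mul_left 2)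

lemma crankTheta_eq_tsum (w q : ℂ) : crankTheta w q = ∑' l, (-w) ^ l * thetaDiff q l :=
  tsum_congr fun l => by rw [neg_pow w l, thetaDiff]

lemma norm_crankTheta_le {w : ℂ} (hq : ‖q‖ < 1) (hw : ‖w‖ ≤ 1) :
    ‖crankTheta w q‖ ≤ 2 / (1 - ‖q‖) := by
  rw [crankTheta_eq_tsum, div_eq_mul_inv]
  refine tsum_of_norm_bounded ((hasSum_geometric_of_lt_one (norm_nonneg _) hq).mul_left 2)
    fun l => ?_
  rw [norm_mul, norm_pow, norm_neg]
  exact (mul_le_of_le_one_left (norm_nonneg _) (pow_le_one₀ (norm_nonneg _) hw)).trans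
    (norm_thetaDiff_le hq.le l)

lemma one_add_pow_three_mul_crankTheta {w : ℂ} (hq : ‖q‖ < 1) (hw : ‖w‖ ≤ 1) :
    (1 + w) ^ 3 * crankTheta w q =
      (1 + w) * (1 - q) + w * (1 + 4 * w) * (3 * (1 - q) - (1 - q ^ 3)) -
        w ^ 2 * (6 * (1 - q) - (1 - q ^ 6)) +
        (-w) ^ 3 * ∑' l, (-w) ^ l * Δ_[1] ^[3] (thetaDiff q) l := by
  rw [crankTheta_eq_tsum, one_add_pow_mul_tsum_neg_pow_mul (summable_norm_thetaDiff hq) hw 3]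
  simp only [sum_range_succ, sum_range_zero, Function.iterate_succ_apply,
    Function.iterate_zero_apply, fwdDiff, thetaDiff]
  norm_num [Nat.choose]
  ring

end CrankThetaBounds

section CrankThetaAsymptotics

open scoped fwdDiff

variable {τ : ℂ}

lemma norm_le_two_mul_re_of_mem_majorCone (hτ : τ ∈ majorCone) : ‖τ‖ ≤ 2 * τ.re := by
  have hnormSq := normSq_le_of_mem_majorCone hτ
  have hre := hτ.1
  rw [Complex.normSq_eq_norm_sq] at hnormSq
  exact abs_le_of_sq_le_sq' (by nlinarith) (by positivity) |>.2

lemma half_le_norm_one_add_exp_neg_pow (hτ : τ ∈ majorCone) (s : ℕ) :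
    1 / 2 ≤ ‖1 + cexp (-τ) ^ s‖ := by
  rw [← Complex.exp_nat_mul]
  set a := s * τ.re with ha
  set b := s * τ.im with hb
  have hb_le : |b| ≤ a := by
    rw [hb, abs_mul, Nat.abs_cast]
    exact mul_le_mul_of_nonneg_left hτ.2 s.cast_nonneg
  rcases le_or_gt |b| (π / 2) with hsmall | hlarge
  · have hre : (cexp (s * -τ)).re = Real.exp (-a) * Real.cos b := by
      rw [Complex.exp_re]
      simp [ha, hb]
    have hcos : 0 ≤ Real.exp (-a) * Real.cos b :=
      mul_nonneg (Real.exp_pos _).le (Real.cos_nonneg_of_mem_Icc (abs_le.1 hsmall))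
    have hre_le := Complex.re_le_norm (1 + cexp (s * -τ))
    rw [Complex.add_re, hre, Complex.one_re] at hre_le
    linarith
  · have hnorm : ‖cexp (s * -τ)‖ = Real.exp (-a) := by
      rw [Complex.norm_exp]
      simp [ha]
    have hexp : Real.exp (-a) ≤ 1 / 2 := by
      rw [Real.exp_neg, one_div]
      exact inv_anti₀ two_pos (by linarith [Real.add_one_le_exp a, Real.pi_gt_three])
    have htriangle := norm_sub_norm_le (1 : ℂ) (-cexp (s * -τ))
    rw [norm_neg, hnorm, sub_neg_eq_add, norm_one] at htriangle
    linarith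

/-- The sum `∑ t / (1 + t k²)`, of size about `√t`, which dominates the tail of the Euler transform
of `crankTheta`. -/
noncomputable def lorentzSum (t : ℝ) : ℝ := ∑' k : ℕ, t / (1 + t * k ^ 2)

lemma div_one_add_mul_sq_le {t : ℝ} (ht : 0 < t) (ht' : t ≤ 1) (k : ℕ) :
    t / (1 + t * k ^ 2) ≤ 2 * (1 / ((k + 1 : ℕ) : ℝ) ^ 2) := by
  rw [← mul_div_assoc, div_le_div_iff₀ (by positivity) (by positivity)]
  push_cast
  nlinarith [mul_nonneg ht.le (sq_nonneg ((k : ℝ) - 1))]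

lemma summable_two_mul_one_div_succ_sq :
    Summable fun k : ℕ => 2 * (1 / ((k + 1 : ℕ) : ℝ) ^ 2) :=
  ((summable_nat_add_iff 1).2 (Real.summable_one_div_nat_pow.2 one_lt_two)).mul_left 2

lemma hasSum_lorentzSum {t : ℝ} (ht : 0 < t) (ht' : t ≤ 1) :
    HasSum (fun k : ℕ => t / (1 + t * k ^ 2)) (lorentzSum t) :=
  (summable_two_mul_one_div_succ_sq.of_nonneg_of_le (fun _ => by positivity)
    (div_one_add_mul_sq_le ht ht')).hasSum

lemma tendsto_lorentzSum : Tendsto lorentzSum (𝓝[>] 0) (𝓝 0) := by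
  suffices Tendsto lorentzSum (𝓝[>] 0) (𝓝 (∑' _ : ℕ, 0)) by rwa [tsum_zero] at this
  refine tendsto_tsum_of_dominated_convergence summable_two_mul_one_div_succ_sq (fun k => ?_) ?_
  · have hcont : ContinuousAt (fun t : ℝ => t / (1 + t * (k : ℝ) ^ 2)) 0 :=
      continuousAt_id.div₀ (by fun_prop) (by simp)
    simpa using hcont.tendsto.mono_left nhdsWithin_le_nhds
  · filter_upwards [Ioc_mem_nhdsGT one_pos] with t ⟨ht, ht'⟩ k
    rw [Real.norm_of_nonneg (by positivity)]
    exact div_one_add_mul_sq_le ht ht' k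

lemma norm_one_sub_exp_neg_le (hτ : τ ∈ majorCone) (hre : τ.re ≤ 1 / 2) :
    ‖1 - cexp (-τ)‖ ≤ 4 * τ.re := by
  have hnorm := norm_le_two_mul_re_of_mem_majorCone hτ
  have hexp := Complex.norm_exp_sub_one_le (x := -τ) (by rw [norm_neg]; linarith)
  rw [norm_sub_rev, norm_neg] at hexp
  linarith

lemma norm_one_sub_exp_neg_sub_le (hτ : τ ∈ majorCone) (hre : τ.re ≤ 1 / 2) :
    ‖1 - cexp (-τ) - τ‖ ≤ 4 * τ.re ^ 2 := by
  have hnorm := norm_le_two_mul_re_of_mem_majorCone hτ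
  have hexp := Complex.norm_exp_sub_one_sub_id_le (x := -τ) (by rw [norm_neg]; linarith)
  rw [norm_neg] at hexp
  calc ‖1 - cexp (-τ) - τ‖ = ‖cexp (-τ) - 1 - -τ‖ := by
        rw [← norm_neg]
        ring_nf
    _ ≤ ‖τ‖ ^ 2 := hexp
    _ ≤ (2 * τ.re) ^ 2 := by gcongr
    _ = 4 * τ.re ^ 2 := by ring

variable {w : ℂ}

lemma norm_tsum_fwdDiff_three_thetaDiff_le {q : ℂ} {t : ℝ} (ht : 0 < t) (ht' : t ≤ 1)
    (hq : ‖q‖ = Real.exp (-t)) (hsub : ‖1 - q‖ ≤ 4 * t) (hw : ‖w‖ ≤ 1) :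
    ‖∑' l, (-w) ^ l * Δ_[1] ^[3] (thetaDiff q) l‖ ≤ 192000 * t * lorentzSum t := by
  refine tsum_of_norm_bounded ((hasSum_lorentzSum ht ht').mul_left (192000 * t)) fun k => ?_
  rw [norm_mul, norm_pow, norm_neg]
  exact (mul_le_of_le_one_left (norm_nonneg _) (pow_le_one₀ (norm_nonneg _) hw)).trans
    (norm_fwdDiff_three_thetaDiff_le ht hq hsub k)

lemma norm_one_add_pow_three_mul_crankTheta_sub_le (hτ : τ ∈ majorCone) (hre : τ.re ≤ 1 / 2)
    (hw : ‖w‖ ≤ 1) :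
    ‖(1 + w) ^ 3 * crankTheta w (cexp (-τ)) - τ * (1 + w)‖ ≤
      τ.re * (488 * τ.re + 192000 * lorentzSum τ.re) := by
  have hsub := norm_one_sub_exp_neg_le hτ hre
  have hsub_sub := norm_one_sub_exp_neg_sub_le hτ hre
  have hq : ‖cexp (-τ)‖ = Real.exp (-τ.re) := by rw [Complex.norm_exp, Complex.neg_re]
  set t := τ.re
  set q := cexp (-τ)
  have ht : 0 < t := hτ.1
  have hq_lt : ‖q‖ < 1 := by
    rw [hq, Real.exp_lt_one_iff]
    exact neg_lt_zero.2 ht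
  have htail := norm_tsum_fwdDiff_three_thetaDiff_le ht (hre.trans (by norm_num)) hq hsub hw
  have hremainder (n : ℕ) : ‖n * (1 - q) - (1 - q ^ n)‖ ≤ n.choose 2 * (4 * t) ^ 2 :=
    (norm_natCast_mul_one_sub_sub_le hq_lt.le n).trans (by gcongr)
  have hw_pow (n : ℕ) : ‖w‖ ^ n ≤ 1 := pow_le_one₀ (norm_nonneg _) hw
  have hone_add : ‖1 + w‖ ≤ 2 := (norm_add_le _ _).trans (by rw [norm_one]; linarith)
  have hone_add_four : ‖1 + 4 * w‖ ≤ 5 :=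
    (norm_add_le _ _).trans (by rw [norm_one, norm_mul, Complex.norm_ofNat]; linarith)
  have hdecomp : (1 + w) ^ 3 * crankTheta w q - τ * (1 + w) =
      (1 + w) * (1 - q - τ) + w * (1 + 4 * w) * ((3 : ℕ) * (1 - q) - (1 - q ^ 3)) -
        w ^ 2 * ((6 : ℕ) * (1 - q) - (1 - q ^ 6)) +
          (-w) ^ 3 * ∑' l, (-w) ^ l * Δ_[1] ^[3] (thetaDiff q) l := by
    rw [one_add_pow_three_mul_crankTheta hq_lt hw]
    push_cast
    ring
  rw [hdecomp]
  refine (norm_add_le_of_le (norm_sub_le_of_le (norm_add_le _ _) le_rfl) le_rfl).trans ?_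
  simp only [norm_mul, norm_pow, norm_neg]
  calc _ ≤ 2 * (4 * t ^ 2) + 1 * 5 * ((3 : ℕ).choose 2 * (4 * t) ^ 2) +
        1 * ((6 : ℕ).choose 2 * (4 * t) ^ 2) + 1 * (192000 * t * lorentzSum t) := by
        gcongr
        exacts [hremainder 3, hw_pow 2, hremainder 6, hw_pow 3]
    _ = t * (488 * t + 192000 * lorentzSum t) := by
        norm_num [Nat.choose]
        ring

/-- The quotient of `crankTheta (q ^ s) q` by its limiting form `τ / (1 + q ^ s) ^ 2`, where
`q = exp (-τ)`. -/
noncomputable def crankThetaRatio (s : ℕ) (τ : ℂ) : ℂ :=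
  crankTheta (cexp (-τ) ^ s) (cexp (-τ)) * (1 + cexp (-τ) ^ s) ^ 2 / τ

lemma norm_crankThetaRatio_sub_one_le (hτ : τ ∈ majorCone) (hre : τ.re ≤ 1 / 2) (s : ℕ) :
    ‖crankThetaRatio s τ - 1‖ ≤ 2 * (488 * τ.re + 192000 * lorentzSum τ.re) := by
  have ht : 0 < τ.re := hτ.1
  have hτ_ne : τ ≠ 0 := by
    rintro rfl
    exact lt_irrefl _ ht
  have hlower := half_le_norm_one_add_exp_neg_pow hτ s
  have hw_ne : 1 + cexp (-τ) ^ s ≠ 0 := norm_pos_iff.1 (by linarith)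
  have hnumerator := norm_one_add_pow_three_mul_crankTheta_sub_le hτ hre
    (norm_pow_le_one s (norm_exp_neg_lt_one ht))
  have hquotient : crankThetaRatio s τ - 1 =
      ((1 + cexp (-τ) ^ s) ^ 3 * crankTheta (cexp (-τ) ^ s) (cexp (-τ)) -
        τ * (1 + cexp (-τ) ^ s)) / (τ * (1 + cexp (-τ) ^ s)) := by
    rw [crankThetaRatio]
    field_simp
  have hdenominator : τ.re * (1 / 2) ≤ ‖τ‖ * ‖1 + cexp (-τ) ^ s‖ := by
    gcongr
    exact Complex.re_le_norm τ
  rw [hquotient, norm_div, norm_mul]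
  calc _ ≤ τ.re * (488 * τ.re + 192000 * lorentzSum τ.re) / (τ.re * (1 / 2)) :=
        div_le_div₀ ((norm_nonneg _).trans hnumerator) hnumerator (by positivity) hdenominator
    _ = 2 * (488 * τ.re + 192000 * lorentzSum τ.re) := by field_simp

lemma tendsto_re_nhdsWithin_majorCone : Tendsto Complex.re (𝓝[majorCone] 0) (𝓝[>] 0) :=
  tendsto_nhdsWithin_iff.2
    ⟨(Complex.continuous_re.tendsto' 0 0 Complex.zero_re).mono_left nhdsWithin_le_nhds,
      eventually_mem_nhdsWithin.mono fun _ h => h.1⟩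

theorem tendsto_crankThetaRatio :
    Tendsto (fun p : ℂ × ℕ => crankThetaRatio p.2 p.1) (𝓝[majorCone] 0 ×ˢ ⊤) (𝓝 1) := by
  have hbound : Tendsto (fun t : ℝ => 2 * (488 * t + 192000 * lorentzSum t)) (𝓝[>] 0) (𝓝 0) := by
    have hid : Tendsto (fun t : ℝ => t) (𝓝[>] 0) (𝓝 0) := nhdsWithin_le_nhds
    simpa using ((hid.const_mul 488).add (tendsto_lorentzSum.const_mul 192000)).const_mul 2
  rw [tendsto_iff_norm_sub_tendsto_zero]
  refine squeeze_zero' (.of_forall fun _ => norm_nonneg _) ?_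
    (hbound.comp (tendsto_re_nhdsWithin_majorCone.comp tendsto_fst))
  have hsmall : ∀ᶠ τ in 𝓝[majorCone] 0, τ ∈ majorCone ∧ τ.re ≤ 1 / 2 :=
    eventually_mem_nhdsWithin.and
      (tendsto_re_nhdsWithin_majorCone.eventually (Ioc_mem_nhdsGT one_half_pos)
        |>.mono fun _ h => h.2)
  filter_upwards [hsmall.prod_inl ⊤] with p ⟨hp, hre⟩
  exact norm_crankThetaRatio_sub_one_le hp hre p.2

end CrankThetaAsymptotics

section LaplaceMethod

open MeasureTheory

lemma one_add_ofReal_mul_I_ne_zero (y : ℝ) : 1 + (y : ℂ) * I ≠ 0 := fun h => by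
  simpa using congrArg Complex.re h

lemma norm_exp_neg_div_one_add_mul_I_le {x y : ℝ} (hx : 0 ≤ x) (hy : |y| ≤ 1) :
    ‖cexp (-(x / (1 + y * I)))‖ ≤ Real.exp (-(1 / 2) * x) := by
  have hnormSq : Complex.normSq (1 + y * I) = 1 + y ^ 2 := by
    simpa using Complex.normSq_add_mul_I 1 y
  have hre : (-((x : ℂ) / (1 + y * I))).re = -(x / (1 + y ^ 2)) := by
    rw [Complex.neg_re, Complex.div_re, hnormSq]
    simp
  rw [Complex.norm_exp, hre, Real.exp_le_exp, neg_mul, neg_le_neg_iff, one_div_mul_eq_div]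
  have hy_sq : y ^ 2 ≤ 1 := (sq_le_one_iff_abs_le_one y).2 hy
  gcongr
  linarith

lemma integral_exp_neg_sq : ∫ u : ℝ, cexp (-(u : ℂ) ^ 2) = √π := by
  have hgauss := integral_gaussian 1
  rw [div_one] at hgauss
  rw [← hgauss, ← integral_complex_ofReal]
  refine integral_congr_ae (.of_forall fun u => ?_)
  push_cast
  ring_nf

variable {ι : Type*} {l : Filter ι} {Λ : ι → ℝ} {g : ι → ℝ → ℂ} {C : ℝ}

/-- The integrand of Laplace's method for the phase `y ^ 2 / (1 + y * I)` on `[-1, 1]`, with large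
parameter `Λ` and amplitude `g`. -/
noncomputable def laplaceIntegrand (Λ : ℝ) (g : ℝ → ℂ) (y : ℝ) : ℂ :=
  cexp (-((Λ * y ^ 2 : ℝ) / (1 + y * I))) * g y

lemma div_sqrt_mem_Icc {Λ u : ℝ} (hΛ : 0 < Λ) (hu : u ∈ Set.Ioc (-√Λ) √Λ) :
    u / √Λ ∈ Set.Icc (-1) 1 := by
  have hsqrt : 0 < √Λ := Real.sqrt_pos.2 hΛ
  rw [Set.mem_Icc, le_div_iff₀ hsqrt, div_le_one hsqrt, neg_one_mul]
  exact ⟨hu.1.le, hu.2⟩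

lemma aestronglyMeasurable_indicator_laplaceIntegrand {Λ : ℝ} {g : ℝ → ℂ} (hΛ : 0 < Λ)
    (hg : ContinuousOn g (Set.Icc (-1) 1)) :
    AEStronglyMeasurable
      ((Set.Ioc (-√Λ) √Λ).indicator fun u => laplaceIntegrand Λ g (u / √Λ)) := by
  have hcont : ContinuousOn (laplaceIntegrand Λ g) (Set.Icc (-1) 1) := by
    refine ContinuousOn.mul (Continuous.continuousOn ?_) hg
    exact ((Continuous.div (by fun_prop) (by fun_prop) one_add_ofReal_mul_I_ne_zero).neg).cexp
  exact (aestronglyMeasurable_indicator_iff measurableSet_Ioc).2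
    ((hcont.comp (by fun_prop) fun _ => div_sqrt_mem_Icc hΛ).aestronglyMeasurable
      measurableSet_Ioc)

lemma norm_laplaceIntegrand_div_sqrt_le {Λ : ℝ} {g : ℝ → ℂ} (hΛ : 0 < Λ)
    (hg : ∀ y ∈ Set.Icc (-1) 1, ‖g y‖ ≤ C) {u : ℝ} (hu : u ∈ Set.Ioc (-√Λ) √Λ) :
    ‖laplaceIntegrand Λ g (u / √Λ)‖ ≤ Real.exp (-(1 / 2) * u ^ 2) * C := by
  have hy := div_sqrt_mem_Icc hΛ hu
  have hscale : Λ * (u / √Λ) ^ 2 = u ^ 2 := by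
    rw [div_pow, Real.sq_sqrt hΛ.le, mul_div_cancel₀ _ hΛ.ne']
  rw [laplaceIntegrand, norm_mul, hscale]
  exact mul_le_mul (norm_exp_neg_div_one_add_mul_I_le (sq_nonneg u) (abs_le.2 hy)) (hg _ hy)
    (norm_nonneg _) (Real.exp_pos _).le

lemma tendsto_laplaceIntegrand_div_sqrt (hΛ : Tendsto Λ l atTop)
    (hlim : Tendsto (fun p : ι × ℝ => g p.1 p.2) (l ×ˢ 𝓝 0) (𝓝 1)) (u : ℝ) :
    Tendsto (fun i => laplaceIntegrand (Λ i) (g i) (u / √(Λ i))) l (𝓝 (cexp (-(u : ℂ) ^ 2))) := by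
  have hy : Tendsto (fun i => u / √(Λ i)) l (𝓝 0) :=
    tendsto_const_nhds.div_atTop (Real.tendsto_sqrt_atTop.comp hΛ)
  have hg : Tendsto (fun i => g i (u / √(Λ i))) l (𝓝 1) := hlim.comp (tendsto_id.prodMk hy)
  have hz : Tendsto (fun i => 1 + ((u / √(Λ i) : ℝ) : ℂ) * I) l (𝓝 1) := by
    simpa using (((Complex.continuous_ofReal.tendsto 0).comp hy).mul_const I).const_add 1
  have hphase := ((tendsto_const_nhds (x := (u : ℂ) ^ 2)).div hz one_ne_zero).neg.cexp.mul hg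
  rw [div_one, mul_one] at hphase
  refine hphase.congr' ?_
  filter_upwards [hΛ.eventually_gt_atTop 0] with i hi
  have hscale : Λ i * (u / √(Λ i)) ^ 2 = u ^ 2 := by
    rw [div_pow, Real.sq_sqrt hi.le, mul_div_cancel₀ _ hi.ne']
  rw [laplaceIntegrand, hscale, Complex.ofReal_pow, Pi.div_apply]

lemma integral_indicator_laplaceIntegrand_div_sqrt {Λ : ℝ} (hΛ : 0 < Λ) (g : ℝ → ℂ) :
    ∫ u, (Set.Ioc (-√Λ) √Λ).indicator (fun u => laplaceIntegrand Λ g (u / √Λ)) u =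
      √Λ * ∫ y in (-1)..1, laplaceIntegrand Λ g y := by
  have hsqrt : √Λ ≠ 0 := (Real.sqrt_pos.2 hΛ).ne'
  rw [integral_indicator measurableSet_Ioc,
    ← intervalIntegral.integral_of_le (neg_le_self (Real.sqrt_nonneg Λ)),
    intervalIntegral.integral_comp_div _ hsqrt, neg_div, div_self hsqrt, Complex.real_smul]

theorem tendsto_sqrt_mul_integral_laplaceIntegrand [l.IsCountablyGenerated]
    (hΛ : Tendsto Λ l atTop) (hcont : ∀ᶠ i in l, ContinuousOn (g i) (Set.Icc (-1) 1))
    (hbound : ∀ᶠ i in l, ∀ y ∈ Set.Icc (-1) 1, ‖g i y‖ ≤ C)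
    (hlim : Tendsto (fun p : ι × ℝ => g p.1 p.2) (l ×ˢ 𝓝 0) (𝓝 1)) :
    Tendsto (fun i => √(Λ i) * ∫ y in (-1)..1, laplaceIntegrand (Λ i) (g i) y) l (𝓝 √π) := by
  have hpos := hΛ.eventually_gt_atTop 0
  rw [← integral_exp_neg_sq]
  refine Tendsto.congr' (hpos.mono fun i hi =>
    integral_indicator_laplaceIntegrand_div_sqrt hi (g i)) ?_
  refine tendsto_integral_filter_of_dominated_convergence
    (fun u => Real.exp (-(1 / 2) * u ^ 2) * C) ?_ ?_
    ((integrable_exp_neg_mul_sq one_half_pos).mul_const _) (.of_forall fun u => ?_)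
  · filter_upwards [hpos, hcont] with i hi using aestronglyMeasurable_indicator_laplaceIntegrand hi
  · filter_upwards [hpos, hbound] with i hi hC
    have hC_nonneg : 0 ≤ C := (norm_nonneg _).trans (hC 0 (by norm_num))
    refine .of_forall fun u => ?_
    rw [norm_indicator_eq_indicator_norm]
    exact Set.indicator_apply_le' (norm_laplaceIntegrand_div_sqrt_le hi hC) fun _ => by positivity
  · refine (tendsto_laplaceIntegrand_div_sqrt hΛ hlim u).congr' ?_
    filter_upwards [(Real.tendsto_sqrt_atTop.comp hΛ).eventually_gt_atTop |u|] with i hi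
    have hu : u ∈ Set.Ioc (-√(Λ i)) √(Λ i) := ⟨(abs_lt.1 hi).1, (abs_lt.1 hi).2.le⟩
    exact (Set.indicator_of_mem hu fun u => laplaceIntegrand (Λ i) (g i) (u / √(Λ i))).symm

end LaplaceMethod

section CentralArc

open MeasureTheory

lemma norm_exp_I_mul_sub_one_mul_exp_neg_le {x : ℝ} (hx : 0 ≤ x) (y : ℝ) :
    Real.exp (-x) * ‖cexp (I * (-(x * y) : ℝ)) - 1‖ ≤ |y| := by
  have hexp : Real.exp (-x) * x ≤ 1 := by
    rw [Real.exp_neg, inv_mul_le_one₀ (Real.exp_pos x)]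
    linarith [Real.add_one_le_exp x]
  calc _ ≤ Real.exp (-x) * ‖-(x * y)‖ := by
        gcongr
        exact Real.norm_exp_I_mul_ofReal_sub_one_le
    _ = Real.exp (-x) * x * |y| := by
        rw [norm_neg, norm_mul, Real.norm_of_nonneg hx, Real.norm_eq_abs, mul_assoc]
    _ ≤ |y| := mul_le_of_le_one_left (abs_nonneg y) hexp

lemma mul_one_add_mul_I_mem_majorCone {t y : ℝ} (ht : 0 < t) (hy : |y| ≤ 1) :
    (t : ℂ) * (1 + y * I) ∈ majorCone := by
  simpa [majorCone, ht, abs_mul, abs_of_pos ht] using mul_le_of_le_one_right ht.le hy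

/-- The factor by which `(1 + q ^ s) ^ (-1)` changes when `q` moves from the saddle point `exp (-t)`
to `exp (-t (1 + y I))`. -/
noncomputable def weightRatio (s : ℕ) (t y : ℝ) : ℂ :=
  (1 + (Real.exp (-t) : ℂ) ^ s) / (1 + cexp (-(t * (1 + y * I))) ^ s)

lemma norm_weightRatio_sub_one_le {t y : ℝ} (ht : 0 < t) (hy : |y| ≤ 1) (s : ℕ) :
    ‖weightRatio s t y - 1‖ ≤ 2 * |y| := by
  have hlower := half_le_norm_one_add_exp_neg_pow (mul_one_add_mul_I_mem_majorCone ht hy) s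
  have hne : 1 + cexp (-(t * (1 + y * I))) ^ s ≠ 0 := norm_pos_iff.1 (by linarith)
  have hnumerator : (1 + (Real.exp (-t) : ℂ) ^ s) - (1 + cexp (-(t * (1 + y * I))) ^ s) =
      -((Real.exp (-(s * t)) : ℝ) * (cexp (I * (-(s * t * y) : ℝ)) - 1)) := by
    rw [mul_sub, Complex.ofReal_exp, Complex.ofReal_exp, ← Complex.exp_add,
      ← Complex.exp_nat_mul, ← Complex.exp_nat_mul, mul_one]
    push_cast
    ring_nf
  have hle := norm_exp_I_mul_sub_one_mul_exp_neg_le (x := s * t) (by positivity) y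
  rw [weightRatio, div_sub_one hne, norm_div, div_le_iff₀ (by linarith), hnumerator, norm_neg,
    norm_mul, Complex.norm_real, Real.norm_of_nonneg (Real.exp_pos _).le]
  nlinarith [abs_nonneg y]

lemma tendsto_mul_one_add_mul_I :
    Tendsto (fun p : ℝ × ℝ => (p.1 : ℂ) * (1 + p.2 * I)) (𝓝[>] 0 ×ˢ 𝓟 (Set.Icc (-1) 1))
      (𝓝[majorCone] 0) := by
  have hmem : ∀ᶠ p : ℝ × ℝ in 𝓝[>] 0 ×ˢ 𝓟 (Set.Icc (-1) 1),
      p.1 ∈ Set.Ioi 0 ∧ p.2 ∈ Set.Icc (-1) 1 :=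
    prod_mem_prod self_mem_nhdsWithin (mem_principal_self _)
  have hcone := hmem.mono fun p hp => mul_one_add_mul_I_mem_majorCone hp.1 (abs_le.2 hp.2)
  have hfst : Tendsto (fun p : ℝ × ℝ => 2 * p.1) (𝓝[>] 0 ×ˢ 𝓟 (Set.Icc (-1) 1)) (𝓝 0) := by
    simpa using ((tendsto_fst (f := 𝓝[>] (0 : ℝ)) (g := 𝓟 (Set.Icc (-1 : ℝ) 1))).mono_right
      nhdsWithin_le_nhds).const_mul 2
  refine tendsto_nhdsWithin_iff.2 ⟨?_, hcone⟩
  refine squeeze_zero_norm' (hcone.mono fun p hp => ?_) hfst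
  simpa using norm_le_two_mul_re_of_mem_majorCone hp

/-- The amplitude left over from the integrand of the circle method at `exp (-t (1 + y I))` once
its size at the saddle point and its Gaussian phase are removed. -/
noncomputable def saddleAmplitude (p : ℝ × ℕ) (y : ℝ) : ℂ :=
  (1 + y * I) ^ 2 * Complex.sqrt (1 + y * I) *
    (tripleSeriesError (p.1 * (1 + y * I)) * crankThetaRatio p.2 (p.1 * (1 + y * I))) *
      weightRatio p.2 p.1 y ^ 2

lemma tendsto_error_mul_ratio :
    Tendsto (fun p : (ℝ × ℕ) × ℝ => tripleSeriesError (p.1.1 * (1 + p.2 * I)) *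
        crankThetaRatio p.1.2 (p.1.1 * (1 + p.2 * I)))
      ((𝓝[>] 0 ×ˢ ⊤) ×ˢ 𝓟 (Set.Icc (-1) 1)) (𝓝 1) := by
  have hτ : Tendsto (fun p : (ℝ × ℕ) × ℝ => (p.1.1 : ℂ) * (1 + p.2 * I))
      ((𝓝[>] 0 ×ˢ ⊤) ×ˢ 𝓟 (Set.Icc (-1) 1)) (𝓝[majorCone] 0) :=
    tendsto_mul_one_add_mul_I.comp ((tendsto_fst.comp tendsto_fst).prodMk tendsto_snd)
  have hratio := tendsto_crankThetaRatio.comp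
    (hτ.prodMk (tendsto_top (f := fun p : (ℝ × ℕ) × ℝ => p.1.2)))
  simpa using (tendsto_tripleSeriesError.comp hτ).mul hratio

lemma eventually_norm_saddleAmplitude_le :
    ∀ᶠ p in 𝓝[>] (0 : ℝ) ×ˢ (⊤ : Filter ℕ),
      ∀ y ∈ Set.Icc (-1) 1, ‖saddleAmplitude p y‖ ≤ 144 := by
  have herror := tendsto_error_mul_ratio.norm.eventually_le_const (u := 2) (by simp)
  have hpos : ∀ᶠ p in 𝓝[>] (0 : ℝ) ×ˢ (⊤ : Filter ℕ), 0 < p.1 :=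
    eventually_mem_nhdsWithin.prod_inl _
  filter_upwards [eventually_prod_principal_iff.1 herror, hpos] with p hp ht y hy
  have hy_abs : |y| ≤ 1 := abs_le.2 hy
  have hz : ‖1 + (y : ℂ) * I‖ ≤ 2 := by
    refine (norm_add_le _ _).trans ?_
    rw [norm_one, norm_mul, Complex.norm_I, mul_one, Complex.norm_real, Real.norm_eq_abs]
    linarith
  have hsqrt : ‖Complex.sqrt (1 + y * I)‖ ≤ 2 := by
    have hsq := congrArg norm (csqrt_mul_self (1 + y * I))
    rw [norm_mul] at hsq
    nlinarith [norm_nonneg (Complex.sqrt (1 + y * I))]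
  have hweight : ‖weightRatio p.2 p.1 y‖ ≤ 3 := by
    have hsub := norm_weightRatio_sub_one_le ht hy_abs p.2
    have htriangle := norm_add_le (weightRatio p.2 p.1 y - 1) 1
    rw [sub_add_cancel, norm_one] at htriangle
    linarith
  rw [saddleAmplitude, norm_mul, norm_mul, norm_mul, norm_pow, norm_pow]
  calc _ ≤ 2 ^ 2 * 2 * 2 * 3 ^ 2 := by gcongr; exact hp y hy
    _ = (144 : ℝ) := by norm_num

lemma tendsto_saddleAmplitude :
    Tendsto (fun p : (ℝ × ℕ) × ℝ => saddleAmplitude p.1 p.2) ((𝓝[>] 0 ×ˢ ⊤) ×ˢ 𝓝 0) (𝓝 1) := by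
  have hIcc : Set.Icc (-1 : ℝ) 1 ∈ 𝓝 0 := Icc_mem_nhds (by norm_num) (by norm_num)
  have hy : Tendsto (fun p : (ℝ × ℕ) × ℝ => p.2) ((𝓝[>] 0 ×ˢ ⊤) ×ˢ 𝓝 0) (𝓝 0) := tendsto_snd
  have hz : Tendsto (fun p : (ℝ × ℕ) × ℝ => 1 + (p.2 : ℂ) * I) ((𝓝[>] 0 ×ˢ ⊤) ×ˢ 𝓝 0) (𝓝 1) := by
    simpa using (((Complex.continuous_ofReal.tendsto 0).comp hy).mul_const I).const_add 1
  have hsqrt : Tendsto (fun p : (ℝ × ℕ) × ℝ => Complex.sqrt (1 + (p.2 : ℂ) * I))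
      ((𝓝[>] 0 ×ˢ ⊤) ×ˢ 𝓝 0) (𝓝 1) := by
    have hcont : ContinuousAt Complex.sqrt 1 := continuousAt_cpow_const Complex.one_mem_slitPlane
    simpa [Function.comp_def] using hcont.tendsto.comp hz
  have herror := tendsto_error_mul_ratio.mono_left
    (prod_mono_right (𝓝[>] 0 ×ˢ ⊤) (le_principal_iff.2 hIcc))
  have hweight : Tendsto (fun p : (ℝ × ℕ) × ℝ => weightRatio p.1.2 p.1.1 p.2)
      ((𝓝[>] 0 ×ˢ ⊤) ×ˢ 𝓝 0) (𝓝 1) := by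
    rw [tendsto_iff_norm_sub_tendsto_zero]
    refine squeeze_zero' (.of_forall fun _ => norm_nonneg _) ?_
      (by simpa using hy.abs.const_mul 2)
    filter_upwards [prod_mem_prod (prod_mem_prod (self_mem_nhdsWithin (s := Set.Ioi (0 : ℝ)))
      (univ_mem (f := ⊤))) hIcc] with p hp
    exact norm_weightRatio_sub_one_le hp.1.1 (abs_le.2 hp.2) p.1.2
  simpa [saddleAmplitude] using (((hz.pow 2).mul hsqrt).mul herror).mul (hweight.pow 2)

end CentralArc

section CircleMethod

open MeasureTheory

lemma continuous_of_hasSum_pow {a : ℕ → ℂ} {F : ℂ → ℂ} {t : ℝ} (ht : 0 < t)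
    (hF : ∀ q, ‖q‖ < 1 → HasSum (fun n => a n * q ^ n) (F q)) :
    Continuous fun θ : ℝ => F (cexp (-(t + θ * I))) := by
  have hlt := norm_exp_neg_add_mul_I_lt_one ht
  simp only [← fun θ => (hF _ (hlt θ)).tsum_eq]
  refine continuous_tsum (fun n => by fun_prop) (hF _ (hlt 0)).summable.norm fun n θ => ?_
  rw [norm_mul, norm_mul, norm_pow, norm_pow, norm_exp_neg_add_mul_I, norm_exp_neg_add_mul_I]

/-- The integrand of Cauchy's formula for `crankCount (μ + s) s` on the circle of radius `exp (-t)`,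
where `μ = growthConst / t ^ 2` makes `t` the saddle point. -/
noncomputable def circleIntegrand (t : ℝ) (s : ℕ) (θ : ℝ) : ℂ :=
  tripleSeries (cexp (-(t + θ * I))) * crankTheta (cexp (-(t + θ * I)) ^ s) (cexp (-(t + θ * I))) *
    cexp ((growthConst / t ^ 2 : ℝ) * (t + θ * I))

lemma continuous_circleIntegrand {t : ℝ} (ht : 0 < t) (s : ℕ) :
    Continuous (circleIntegrand t s) := by
  have hseries := continuous_of_hasSum_pow (a := fun n => (crankCount n s : ℂ)) ht
    fun q hq => hasSum_crankCount s hq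
  have hquotient : Continuous fun θ : ℝ => tripleSeries (cexp (-(t + θ * I))) *
      crankTheta (cexp (-(t + θ * I)) ^ s) (cexp (-(t + θ * I))) := by
    refine (hseries.div (g := fun θ : ℝ => cexp (-(t + θ * I)) ^ s) (by fun_prop)
      fun θ => pow_ne_zero _ (Complex.exp_ne_zero _)).congr fun θ => ?_
    exact mul_div_cancel_left₀ _ (pow_ne_zero _ (Complex.exp_ne_zero _))
  exact hquotient.mul (by fun_prop)

/-- The size of the integral of `circleIntegrand t s` over the circle, up to a constant. -/
noncomputable def saddleSize (t : ℝ) (s : ℕ) : ℝ :=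
  t ^ 4 * Real.exp (2 * growthConst / t) / (1 + Real.exp (-t) ^ s) ^ 2

lemma saddleSize_pos {t : ℝ} (ht : 0 < t) (s : ℕ) : 0 < saddleSize t s := by
  unfold saddleSize
  positivity

lemma csqrt_ofReal_mul {r : ℝ} (hr : 0 < r) {x : ℂ} (hx : x ≠ 0) :
    Complex.sqrt (r * x) = √r * Complex.sqrt x := by
  have hr_ne : (r : ℂ) ≠ 0 := Complex.ofReal_ne_zero.2 hr.ne'
  have hsqrt : Complex.sqrt (r : ℂ) = √r := by
    rw [Complex.sqrt_of_nonneg (by exact_mod_cast hr.le), Complex.ofReal_re]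
  rw [← hsqrt]
  unfold Complex.sqrt
  rw [Complex.cpow_def_of_ne_zero (mul_ne_zero hr_ne hx), Complex.cpow_def_of_ne_zero hr_ne,
    Complex.cpow_def_of_ne_zero hx, ← Complex.exp_add, Complex.log_ofReal_mul hr hx,
    Complex.ofReal_log hr.le, add_mul]

lemma exp_saddle_phase {t : ℝ} (ht : 0 < t) (y : ℝ) :
    cexp (growthConst / (t * (1 + y * I))) *
        cexp ((growthConst / t ^ 2 : ℝ) * (t * (1 + y * I))) =
      Real.exp (2 * growthConst / t) *
        cexp (-((growthConst / t * y ^ 2 : ℝ) / (1 + y * I))) := by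
  have ht_ne : (t : ℂ) ≠ 0 := Complex.ofReal_ne_zero.2 ht.ne'
  have hz := one_add_ofReal_mul_I_ne_zero y
  rw [Complex.ofReal_exp, ← Complex.exp_add, ← Complex.exp_add]
  congr 1
  push_cast
  field_simp
  linear_combination (growthConst : ℂ) * y ^ 2 * Complex.I_sq

lemma crankTheta_exp_neg {τ : ℂ} (hτ : τ ∈ majorCone) (s : ℕ) :
    crankTheta (cexp (-τ) ^ s) (cexp (-τ)) =
      τ * crankThetaRatio s τ / (1 + cexp (-τ) ^ s) ^ 2 := by
  have hτ_ne : τ ≠ 0 := Complex.ne_zero_of_re_pos hτ.1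
  have hweight : 1 + cexp (-τ) ^ s ≠ 0 :=
    norm_pos_iff.1 (by linarith [half_le_norm_one_add_exp_neg_pow hτ s])
  rw [crankThetaRatio]
  field_simp

lemma sqrt_pi_mul_mul_sqrt_div_pi {t : ℝ} (ht : 0 ≤ t) : √(π * t) * √(t / π) = t := by
  rw [← Real.sqrt_mul (by positivity), show π * t * (t / π) = t * t by field_simp,
    Real.sqrt_mul_self ht]

lemma circleIntegrand_eq_laplaceIntegrand {t y : ℝ} (ht : 0 < t) (hy : |y| ≤ 1) (s : ℕ) :
    circleIntegrand t s (t * y) = (saddleSize t s / (2 * π * t * √(π * t)) : ℝ) *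
      laplaceIntegrand (growthConst / t) (saddleAmplitude (t, s)) y := by
  have hcone := mul_one_add_mul_I_mem_majorCone ht hy
  have hτ : (t : ℂ) + (t * y : ℝ) * I = t * (1 + y * I) := by
    push_cast
    ring
  have ht_ne : (t : ℂ) ≠ 0 := Complex.ofReal_ne_zero.2 ht.ne'
  have hweight₀ : (1 : ℂ) + cexp (-t) ^ s ≠ 0 := by
    exact_mod_cast (by positivity : 0 < 1 + Real.exp (-t) ^ s).ne'
  have hsqrt : Complex.sqrt (t * (1 + y * I) / π) = √(t / π) * Complex.sqrt (1 + y * I) := by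
    rw [← csqrt_ofReal_mul (div_pos ht Real.pi_pos) (one_add_ofReal_mul_I_ne_zero y)]
    push_cast
    ring_nf
  have hsqrt_ne : (√(π * t) : ℂ) ≠ 0 := Complex.ofReal_ne_zero.2 (by positivity)
  have hsqrt_mul : (√(π * t) : ℂ) * √(t / π) = t := by
    exact_mod_cast sqrt_pi_mul_mul_sqrt_div_pi ht.le
  have hphase := exp_saddle_phase ht y
  rw [circleIntegrand, hτ, tripleSeries_exp_neg hcone.1, crankTheta_exp_neg hcone, hsqrt,
    laplaceIntegrand, saddleAmplitude, saddleSize, weightRatio, div_pow]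
  set z := 1 + (y : ℂ) * I
  calc _ = t ^ 2 * √(t / π) / (2 * π) * z ^ 2 * Complex.sqrt z * (tripleSeriesError (t * z) *
        crankThetaRatio s (t * z)) / (1 + cexp (-(t * z)) ^ s) ^ 2 *
          (cexp (growthConst / (t * z)) * cexp ((growthConst / t ^ 2 : ℝ) * (t * z))) := by ring
    _ = _ := by
      rw [hphase, eq_div_of_mul_eq hsqrt_ne ((mul_comm _ _).trans hsqrt_mul)]
      push_cast
      field_simp

lemma integral_circleIntegrand_central {t : ℝ} (ht : 0 < t) (s : ℕ) :
    (∫ θ in (-t)..t, circleIntegrand t s θ) / saddleSize t s =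
      (2 * π * √(π * growthConst) : ℝ)⁻¹ * (√(growthConst / t) *
        ∫ y in (-1)..1, laplaceIntegrand (growthConst / t) (saddleAmplitude (t, s)) y) := by
  have hrescale : ∫ θ in (-t)..t, circleIntegrand t s θ =
      t * ∫ y in (-1)..1, circleIntegrand t s (t * y) := by
    rw [← Complex.real_smul, intervalIntegral.smul_integral_comp_mul_left, mul_neg_one, mul_one]
  have hlaplace : ∫ y in (-1)..1, circleIntegrand t s (t * y) =
      (saddleSize t s / (2 * π * t * √(π * t)) : ℝ) *
        ∫ y in (-1)..1, laplaceIntegrand (growthConst / t) (saddleAmplitude (t, s)) y := by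
    rw [← intervalIntegral.integral_const_mul]
    refine intervalIntegral.integral_congr fun y hy => ?_
    rw [Set.uIcc_of_le (by norm_num)] at hy
    exact circleIntegrand_eq_laplaceIntegrand ht (abs_le.2 hy) s
  have hsqrt : √(π * growthConst) = √(π * t) * √(growthConst / t) := by
    rw [← Real.sqrt_mul (by positivity)]
    congr 1
    field_simp
  have hconst : t * (saddleSize t s / (2 * π * t * √(π * t))) / saddleSize t s =
      (2 * π * √(π * growthConst))⁻¹ * √(growthConst / t) := by
    have hsize := (saddleSize_pos ht s).ne'
    have hgrowth : √(growthConst / t) ≠ 0 := by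
      have := growthConst_pos
      positivity
    rw [hsqrt]
    field_simp
  rw [hrescale, hlaplace, ← mul_assoc, ← mul_assoc, mul_div_right_comm]
  congr 1
  exact_mod_cast hconst

lemma continuousOn_saddleAmplitude {t : ℝ} (ht : 0 < t) (s : ℕ) :
    ContinuousOn (saddleAmplitude (t, s)) (Set.Icc (-1) 1) := by
  set K : ℝ := saddleSize t s / (2 * π * t * √(π * t))
  have hK_ne : (K : ℂ) ≠ 0 := by
    have := saddleSize_pos ht s
    exact Complex.ofReal_ne_zero.2 (by positivity)
  have hphase : Continuous fun y : ℝ => ((growthConst / t * y ^ 2 : ℝ) : ℂ) / (1 + y * I) :=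
    Continuous.div (by fun_prop) (by fun_prop) one_add_ofReal_mul_I_ne_zero
  have hcont : Continuous fun y : ℝ => circleIntegrand t s (t * y) / K *
      cexp ((growthConst / t * y ^ 2 : ℝ) / (1 + y * I)) :=
    (((continuous_circleIntegrand ht s).comp (continuous_const_mul t)).div_const _).mul hphase.cexp
  refine hcont.continuousOn.congr fun y hy => ?_
  beta_reduce
  rw [circleIntegrand_eq_laplaceIntegrand ht (abs_le.2 hy), mul_div_cancel_left₀ _ hK_ne,
    laplaceIntegrand, mul_right_comm, ← Complex.exp_add, neg_add_cancel, Complex.exp_zero, one_mul]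

theorem tendsto_integral_central_div_saddleSize :
    Tendsto (fun p : ℝ × ℕ => (∫ θ in (-p.1)..p.1, circleIntegrand p.1 p.2 θ) / saddleSize p.1 p.2)
      (𝓝[>] 0 ×ˢ ⊤) (𝓝 ((2 * π * √growthConst)⁻¹ : ℝ)) := by
  have hpos : ∀ᶠ p in 𝓝[>] (0 : ℝ) ×ˢ (⊤ : Filter ℕ), 0 < p.1 :=
    eventually_mem_nhdsWithin.prod_inl _
  have hΛ : Tendsto (fun p : ℝ × ℕ => growthConst / p.1) (𝓝[>] 0 ×ˢ ⊤) atTop := by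
    simp only [div_eq_mul_inv]
    exact (tendsto_inv_nhdsGT_zero.comp tendsto_fst).const_mul_atTop growthConst_pos
  have hlaplace := tendsto_sqrt_mul_integral_laplaceIntegrand hΛ
    (hpos.mono fun p hp => continuousOn_saddleAmplitude hp p.2) eventually_norm_saddleAmplitude_le
    tendsto_saddleAmplitude
  have hconst : (2 * π * √(π * growthConst))⁻¹ * √π = (2 * π * √growthConst)⁻¹ := by
    rw [Real.sqrt_mul Real.pi_pos.le]
    field_simp
  rw [← hconst, Complex.ofReal_mul]
  refine (hlaplace.const_mul _).congr' (hpos.mono fun p hp => ?_)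
  exact (integral_circleIntegrand_central hp p.2).symm

lemma eventually_norm_tripleSeries_exp_neg_le :
    ∀ᶠ t : ℝ in 𝓝[>] 0, ‖tripleSeries (cexp (-t))‖ ≤ 2 * Real.exp (growthConst / t) := by
  have htendsto : Tendsto (fun t : ℝ => (t : ℂ)) (𝓝[>] 0) (𝓝[majorCone] 0) := by
    have hzero : Tendsto (fun _ : ℝ => (0 : ℝ)) (𝓝[>] 0) (𝓟 (Set.Icc (-1) 1)) :=
      tendsto_principal.2 (.of_forall fun _ => by norm_num)
    simpa [Function.comp_def] using tendsto_mul_one_add_mul_I.comp (tendsto_id.prodMk hzero)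
  have herror : ∀ᶠ τ in 𝓝[majorCone] 0, ‖tripleSeriesError τ‖ ≤ 2 :=
    tendsto_tripleSeriesError.norm.eventually_le_const (by norm_num)
  have hsmall : ∀ᶠ t : ℝ in 𝓝[>] 0, t ≤ 1 :=
    (eventually_le_nhds one_pos).filter_mono nhdsWithin_le_nhds
  filter_upwards [htendsto.eventually herror, hsmall, self_mem_nhdsWithin] with t herror ht1 ht
  rw [Set.mem_Ioi] at ht
  have hpi := Real.pi_gt_three
  have hfactor : ‖(t : ℂ) / (2 * π)‖ ≤ 1 := by
    rw [show (t : ℂ) / (2 * π) = (t / (2 * π) : ℝ) by push_cast; rfl,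
      Complex.norm_of_nonneg (by positivity), div_le_one (by positivity)]
    linarith
  have hsqrt : ‖Complex.sqrt (t / π)‖ ≤ 1 := by
    rw [← sq_le_one_iff₀ (norm_nonneg _), ← norm_pow, sq, csqrt_mul_self, ← Complex.ofReal_div,
      Complex.norm_of_nonneg (by positivity), div_le_one (by positivity)]
    linarith
  have hexp : ‖cexp (growthConst / t)‖ = Real.exp (growthConst / t) := by
    rw [Complex.norm_exp, ← Complex.ofReal_div, Complex.ofReal_re]
  rw [tripleSeries_exp_neg (by simpa using ht), norm_mul, norm_mul, norm_mul, hexp]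
  calc _ ≤ 1 * 1 * Real.exp (growthConst / t) * 2 := by gcongr
    _ = 2 * Real.exp (growthConst / t) := by ring

lemma two_div_one_sub_exp_neg_le {t : ℝ} (ht : 0 < t) (ht' : t ≤ 1) :
    2 / (1 - Real.exp (-t)) ≤ 4 / t := by
  have hlower : t / 2 ≤ 1 - Real.exp (-t) := by
    have hexp : Real.exp (-t) ≤ 1 / (1 + t) := by
      rw [Real.exp_neg, one_div]
      exact inv_anti₀ (by positivity) (by linarith [Real.add_one_le_exp t])
    have hfrac : 1 / (1 + t) ≤ 1 - t / 2 := by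
      rw [div_le_iff₀ (by positivity)]
      nlinarith
    linarith
  rw [div_le_div_iff₀ (by linarith) ht]
  linarith

lemma eventually_norm_circleIntegrand_le :
    ∀ᶠ t : ℝ in 𝓝[>] 0, ∀ (s : ℕ) (θ : ℝ), t ≤ |θ| → |θ| ≤ π →
      ‖circleIntegrand t s θ‖ ≤
        8 / t * Real.exp (2 * growthConst / t) * Real.exp (-(1 / (12 * t))) := by
  have hsmall : ∀ᶠ t : ℝ in 𝓝[>] 0, t ≤ 1 / 2 :=
    (eventually_le_nhds (by norm_num)).filter_mono nhdsWithin_le_nhds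
  filter_upwards [eventually_norm_tripleSeries_exp_neg_le, hsmall, self_mem_nhdsWithin]
    with t hseries ht' ht s θ hθ hθ'
  rw [Set.mem_Ioi] at ht
  have hq := norm_exp_neg_add_mul_I_lt_one ht θ
  have hminor := norm_tripleSeries_le_of_minorArc ht ht' hθ hθ'
  have htheta : ‖crankTheta (cexp (-(t + θ * I)) ^ s) (cexp (-(t + θ * I)))‖ ≤ 4 / t := by
    refine (norm_crankTheta_le hq (norm_pow_le_one s hq)).trans ?_
    rw [norm_exp_neg_add_mul_I]
    exact two_div_one_sub_exp_neg_le ht (by linarith)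
  have hweight : ‖cexp ((growthConst / t ^ 2 : ℝ) * (t + θ * I))‖ =
      Real.exp (growthConst / t) := by
    have hre : ((t : ℂ) + θ * I).re = t := by simp
    rw [Complex.norm_exp, Complex.re_ofReal_mul, hre]
    field_simp
  rw [circleIntegrand, norm_mul, norm_mul, hweight]
  calc _ ≤ 2 * Real.exp (growthConst / t) * Real.exp (-(1 / (12 * t))) * (4 / t) *
        Real.exp (growthConst / t) := by
        gcongr
        exact hminor.trans (by gcongr)
    _ = 8 / t * (Real.exp (growthConst / t) * Real.exp (growthConst / t)) *
        Real.exp (-(1 / (12 * t))) := by ring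
    _ = _ := by rw [← Real.exp_add, ← add_div, ← two_mul]

lemma tendsto_inv_pow_mul_exp_neg_inv :
    Tendsto (fun t : ℝ => t⁻¹ ^ 5 * Real.exp (-(1 / (12 * t)))) (𝓝[>] 0) (𝓝 0) := by
  have hinv : Tendsto (fun t : ℝ => t⁻¹ / 12) (𝓝[>] 0) atTop :=
    tendsto_inv_nhdsGT_zero.atTop_div_const (by norm_num)
  have hdecay :=
    ((Real.tendsto_pow_mul_exp_neg_atTop_nhds_zero 5).comp hinv).const_mul (12 ^ 5)
  rw [mul_zero] at hdecay
  refine hdecay.congr fun t => ?_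
  rw [Function.comp_apply, show -(1 / (12 * t)) = -(t⁻¹ / 12) by ring]
  ring

lemma norm_integral_sub_integral_le {E : Type*} [NormedAddCommGroup E] [NormedSpace ℝ E]
    {f : ℝ → E} (hf : Continuous f) {t R B : ℝ} (ht : 0 ≤ t) (htR : t ≤ R)
    (hB : ∀ θ, t ≤ |θ| → |θ| ≤ R → ‖f θ‖ ≤ B) :
    ‖(∫ θ in (-R)..R, f θ) - ∫ θ in (-t)..t, f θ‖ ≤ 2 * B * (R - t) := by
  have hf_int : ∀ a b, IntervalIntegrable f volume a b := hf.intervalIntegrable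
  have hsplit : (∫ θ in (-R)..R, f θ) - ∫ θ in (-t)..t, f θ =
      (∫ θ in (-R)..(-t), f θ) + ∫ θ in t..R, f θ := by
    rw [← intervalIntegral.integral_add_adjacent_intervals (hf_int (-R) (-t)) (hf_int (-t) R),
      ← intervalIntegral.integral_add_adjacent_intervals (hf_int (-t) t) (hf_int t R)]
    abel
  have hleft : ‖∫ θ in (-R)..(-t), f θ‖ ≤ B * |-t - -R| := by
    refine intervalIntegral.norm_integral_le_of_norm_le_const fun θ hθ => ?_
    rw [Set.uIoc_of_le (by linarith)] at hθ
    have habs : |θ| = -θ := abs_of_nonpos (by linarith [hθ.2])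
    exact hB θ (by linarith [hθ.2]) (by linarith [hθ.1])
  have hright : ‖∫ θ in t..R, f θ‖ ≤ B * |R - t| := by
    refine intervalIntegral.norm_integral_le_of_norm_le_const fun θ hθ => ?_
    rw [Set.uIoc_of_le htR] at hθ
    have habs : |θ| = θ := abs_of_nonneg (by linarith [hθ.1])
    exact hB θ (by linarith [hθ.1]) (by linarith [hθ.2])
  rw [abs_of_nonneg (by linarith)] at hleft hright
  rw [hsplit]
  linarith [norm_add_le (∫ θ in (-R)..(-t), f θ) (∫ θ in t..R, f θ)]

lemma le_saddleSize {t : ℝ} (ht : 0 < t) (s : ℕ) :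
    t ^ 4 * Real.exp (2 * growthConst / t) / 4 ≤ saddleSize t s := by
  have hweight : Real.exp (-t) ^ s ≤ 1 := pow_le_one₀ (Real.exp_pos _).le (by simpa using ht.le)
  have hsq : (1 + Real.exp (-t) ^ s) ^ 2 ≤ 4 := by
    nlinarith [pow_nonneg (Real.exp_pos (-t)).le s]
  unfold saddleSize
  gcongr

lemma eventually_norm_integral_outer_div_saddleSize_le :
    ∀ᶠ p : ℝ × ℕ in 𝓝[>] 0 ×ˢ ⊤,
      ‖((∫ θ in (-π)..π, circleIntegrand p.1 p.2 θ) -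
          ∫ θ in (-p.1)..p.1, circleIntegrand p.1 p.2 θ) / saddleSize p.1 p.2‖ ≤
        256 * (p.1⁻¹ ^ 5 * Real.exp (-(1 / (12 * p.1)))) := by
  have hsmall : ∀ᶠ t : ℝ in 𝓝[>] 0, t ≤ 1 :=
    (eventually_le_nhds one_pos).filter_mono nhdsWithin_le_nhds
  filter_upwards [(eventually_mem_nhdsWithin.and (hsmall.and
    eventually_norm_circleIntegrand_le)).prod_inl _] with ⟨t, s⟩ ⟨ht, ht1, hbound⟩
  rw [Set.mem_Ioi] at ht
  have hpi := Real.pi_gt_three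
  have houter := norm_integral_sub_integral_le (continuous_circleIntegrand ht s) ht.le
    (by linarith) (hbound s)
  set B := 8 / t * Real.exp (2 * growthConst / t) * Real.exp (-(1 / (12 * t))) with hB
  have hsize := saddleSize_pos ht s
  rw [norm_div, Complex.norm_of_nonneg hsize.le, div_le_iff₀ hsize]
  calc _ ≤ 2 * B * (π - t) := houter
    _ ≤ 2 * B * 4 := by
        gcongr
        linarith [Real.pi_le_four]
    _ = 256 * (t⁻¹ ^ 5 * Real.exp (-(1 / (12 * t)))) *
        (t ^ 4 * Real.exp (2 * growthConst / t) / 4) := by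
        rw [hB]
        field_simp
        norm_num
    _ ≤ _ := by
        gcongr
        exact le_saddleSize ht s

theorem tendsto_integral_circleIntegrand_div_saddleSize :
    Tendsto (fun p : ℝ × ℕ => (∫ θ in (-π)..π, circleIntegrand p.1 p.2 θ) / saddleSize p.1 p.2)
      (𝓝[>] 0 ×ˢ ⊤) (𝓝 ((2 * π * √growthConst)⁻¹ : ℝ)) := by
  have hdecay := (tendsto_inv_pow_mul_exp_neg_inv.const_mul 256).comp
    (tendsto_fst (g := (⊤ : Filter ℕ)))
  rw [mul_zero] at hdecay
  have houter := squeeze_zero_norm' eventually_norm_integral_outer_div_saddleSize_le hdecay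
  have htotal := houter.add tendsto_integral_central_div_saddleSize
  rw [zero_add] at htotal
  refine htotal.congr fun p => ?_
  rw [← add_div, sub_add_cancel]

end CircleMethod

section Asymptotics

/-- The asymptotic main term of `crankCount (μ + s) s` as `μ → ∞`. -/
noncomputable def crankMainTerm (μ s : ℝ) : ℝ :=
  5 * (2 * π * √(5 / 12)) / (2 ^ 5 * 3) * Real.exp (2 * π * √(5 / 12) * √μ) / μ ^ 2 /
    (1 + Real.exp (-(2 * π * √(5 / 12) * s) / (2 * √μ))) ^ 2

lemma crankMainTerm_pos {μ : ℝ} (hμ : 0 < μ) (s : ℝ) : 0 < crankMainTerm μ s := by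
  unfold crankMainTerm
  positivity

lemma sqrt_growthConst : √growthConst = π * √(5 / 12) := by
  rw [growthConst, show 5 * π ^ 2 / 12 = π ^ 2 * (5 / 12) by ring, Real.sqrt_mul (sq_nonneg _),
    Real.sqrt_sq Real.pi_pos.le]

lemma saddleSize_sqrt {μ : ℝ} (hμ : 0 < μ) (s : ℕ) :
    saddleSize (√(growthConst / μ)) s = 4 * π ^ 2 * √growthConst * crankMainTerm μ s := by
  have hA := growthConst_pos
  have hsqrtA : 0 < √growthConst := Real.sqrt_pos.2 hA
  have hA_sq : growthConst = √growthConst ^ 2 := (Real.sq_sqrt hA.le).symm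
  have hμ_sq : μ = √μ ^ 2 := (Real.sq_sqrt hμ.le).symm
  have hexp : 2 * growthConst / (√growthConst / √μ) = 2 * √growthConst * √μ := by
    rw [div_div_eq_mul_div, div_eq_iff hsqrtA.ne']
    nth_rw 1 [hA_sq]
    ring
  have hweight : s * -(√growthConst / √μ) = -(2 * √growthConst * s) / (2 * √μ) := by
    field_simp
  have hsq : √growthConst ^ 2 = 5 * π ^ 2 / 12 := hA_sq.symm
  have hc : 2 * π * √(5 / 12) = 2 * √growthConst := by
    rw [sqrt_growthConst]
    ring
  rw [crankMainTerm, hc, saddleSize, Real.sqrt_div hA.le, ← Real.exp_nat_mul, hexp, hweight]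
  have hpow : (√growthConst / √μ) ^ 4 = 5 * π ^ 2 / 12 * √growthConst ^ 2 / μ ^ 2 := by
    rw [← hsq, div_pow]
    nth_rw 2 [hμ_sq]
    ring
  rw [hpow]
  field_simp
  norm_num

lemma integral_circleIntegrand_sqrt {μ : ℕ} (hμ : 0 < μ) (s : ℕ) :
    ∫ θ in (-π)..π, circleIntegrand (√(growthConst / μ)) s θ = 2 * π * crankCount (μ + s) s := by
  have hA := growthConst_pos
  have hsaddle : growthConst / √(growthConst / μ) ^ 2 = μ := by
    rw [Real.sq_sqrt (by positivity)]
    field_simp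
  rw [← integral_tripleSeries_mul_crankTheta μ s (t := √(growthConst / μ)) (by positivity)]
  simp only [circleIntegrand, hsaddle, Complex.ofReal_natCast]

lemma tendsto_sqrt_growthConst_div :
    Tendsto (fun μ : ℕ => √(growthConst / μ)) atTop (𝓝[>] 0) := by
  refine tendsto_nhdsWithin_iff.2
    ⟨by simpa using (tendsto_const_div_atTop_nhds_zero_nat growthConst).sqrt, ?_⟩
  filter_upwards [eventually_gt_atTop 0] with μ hμ
  have hA := growthConst_pos
  exact Set.mem_Ioi.2 (by positivity)

theorem tendsto_crankCount_div_crankMainTerm :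
    Tendsto (fun p : ℕ × ℕ => (crankCount (p.1 + p.2) p.2 : ℝ) / crankMainTerm p.1 p.2)
      (atTop ×ˢ ⊤) (𝓝 1) := by
  have hA : 0 < √growthConst := Real.sqrt_pos.2 growthConst_pos
  have hsaddle := tendsto_integral_circleIntegrand_div_saddleSize.comp
    (tendsto_sqrt_growthConst_div.prodMap (tendsto_id (x := (⊤ : Filter ℕ))))
  have hlim := (Complex.continuous_re.tendsto _).comp
    (hsaddle.const_mul ((2 * π * √growthConst : ℝ) : ℂ))
  rw [← Complex.ofReal_mul, mul_inv_cancel₀ (by positivity), Complex.ofReal_re] at hlim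
  refine hlim.congr' (((eventually_gt_atTop 0).prod_inl _).mono fun p hp => ?_)
  have hmain := crankMainTerm_pos (Nat.cast_pos.2 hp) p.2
  have hreal : 2 * π * √growthConst * (2 * π * (crankCount (p.1 + p.2) p.2 : ℝ) /
      (4 * π ^ 2 * √growthConst * crankMainTerm p.1 p.2)) =
        crankCount (p.1 + p.2) p.2 / crankMainTerm p.1 p.2 := by
    field_simp
    ring
  rw [Function.comp_apply, Function.comp_apply, Prod.map_fst, Prod.map_snd, id,
    integral_circleIntegrand_sqrt hp, saddleSize_sqrt (Nat.cast_pos.2 hp)]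
  beta_reduce
  rw [← hreal]
  exact_mod_cast Complex.ofReal_re _

lemma exists_forall_abs_crankCount_div_sub_one_lt {ε : ℝ} (hε : 0 < ε) :
    ∃ N : ℕ, ∀ μ s : ℕ, N ≤ μ → |(crankCount (μ + s) s : ℝ) / crankMainTerm μ s - 1| < ε := by
  have hclose := tendsto_crankCount_div_crankMainTerm.eventually (Metric.ball_mem_nhds 1 hε)
  rw [prod_top, eventually_comap] at hclose
  obtain ⟨N, hN⟩ := eventually_atTop.1 hclose
  exact ⟨N, fun μ s hμ => hN μ hμ (μ, s) rfl⟩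

lemma Dbip_eq_crankCount_natAbs (m n : ℕ) : Dbip m n = crankCount n ((n : ℤ) - m).natAbs := by
  rw [Dbip_eq_crankCount, Int.natCast_natAbs]
  rcases abs_choice ((n : ℤ) - m) with habs | habs
  · rw [habs, ← crankCount_neg, neg_sub]
  · rw [habs, neg_sub]

end Asymptotics

end BipartiteAsymptotics

open Real in
/-- uniformly for positive integers `m, n` with `m ≤ 2n`, as
`μ = min(m, 2n - m) → ∞`,
`D(m,n) ~ (5c/96) · e^{c√μ}/μ² · (1 + e^{-c|n-m|/(2√μ)})⁻²` where `c = 2π√(5/12)`. -/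
theorem Dbip_asymptotic (c : ℝ) (hc : c = 2 * π * Real.sqrt (5 / 12)) :
    ∀ ε > (0 : ℝ), ∃ N : ℕ, ∀ m n : ℕ, 0 < m → 0 < n → m ≤ 2 * n →
      N ≤ min m (2 * n - m) →
      |((Dbip m n : ℤ) : ℝ) /
          (5 * c / (2 ^ 5 * 3) *
            Real.exp (c * Real.sqrt (min m (2 * n - m) : ℕ)) /
              ((min m (2 * n - m) : ℕ) : ℝ) ^ 2 /
            (1 + Real.exp (-(c * |(n : ℝ) - (m : ℝ)|) /
                (2 * Real.sqrt (min m (2 * n - m) : ℕ)))) ^ 2) - 1| < ε := by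
  subst hc
  intro ε hε
  obtain ⟨N, hN⟩ := BipartiteAsymptotics.exists_forall_abs_crankCount_div_sub_one_lt hε
  refine ⟨N, fun m n _ _ hmn hμ => ?_⟩
  have hsize : min m (2 * n - m) + ((n : ℤ) - m).natAbs = n := by omega
  have hcrank : (((n : ℤ) - m).natAbs : ℝ) = |(n : ℝ) - m| := by
    rw [Nat.cast_natAbs]
    push_cast
    rfl
  have hlt := hN _ ((n : ℤ) - m).natAbs hμ
  rw [hsize, hcrank, ← Int.cast_natCast, ← BipartiteAsymptotics.Dbip_eq_crankCount_natAbs] at hlt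
  exact hlt
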